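/- Let A, B, Y be Polish metric spaces and let D ⊆ FP(A, 𝒫_p(B)) × FP(A × B, Y) be the set of all pairs (μ′, μ) such that und_A(μ′) equals the marginal of μ on A × B. Then the map J : D → FP(A, FP(B, Y)) defined by J(μ′, μ) := disint_A(μ) (disintegrating μ ∈ 𝒫_p(A × B × Y) with respect to the A-coordinate) is continuous, where D carries the product of the respective (nested) p-Wasserstein metrics. -/

import Mathlib

open MeasureTheory ProbabilityTheory ENNReal Filter Topology

noncomputable section

namespace AWPaper

/-! ### Generic constructions -/

variable {α β : Type*}

/-- The set of couplings of two measures. -/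
def Cpl [MeasurableSpace α] [MeasurableSpace β] (μ : Measure α) (ν : Measure β) :
    Set (Measure (α × β)) :=
  {π | π.map Prod.fst = μ ∧ π.map Prod.snd = ν}

/-- The `p`-Wasserstein distance (with values in `ℝ≥0∞`) associated to an
`ℝ≥0∞`-valued distance function `d`. -/
def Wp [MeasurableSpace α] (p : ℝ) (d : α → α → ℝ≥0∞) (μ ν : Measure α) : ℝ≥0∞ :=
  ⨅ π ∈ Cpl μ ν, (∫⁻ z, d z.1 z.2 ^ p ∂π) ^ (1 / p)

/-- The topology generated by the open balls of an `ℝ≥0∞`-valued distance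
function.  For a genuine metric this is the metric topology. -/
def ballTop (d : α → α → ℝ≥0∞) : TopologicalSpace α :=
  TopologicalSpace.generateFrom {s | ∃ x ε, 0 < ε ∧ s = {y | d x y < ε}}

/-- The product distance of two `ℝ≥0∞`-valued distances, `ℓ^p`-style. -/
def prodDist (p : ℝ) (d₁ : α → α → ℝ≥0∞) (d₂ : β → β → ℝ≥0∞) :
    α × β → α × β → ℝ≥0∞ :=
  fun u v => (d₁ u.1 v.1 ^ p + d₂ u.2 v.2 ^ p) ^ (1 / p)

/-- Membership in the `p`-Wasserstein space: a probability measure with finite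
`p`-th moment (w.r.t. the distance function `d`). -/
def MemPp [MeasurableSpace α] (p : ℝ) (d : α → α → ℝ≥0∞) (μ : Measure α) : Prop :=
  IsProbabilityMeasure μ ∧ ∃ x₀, ∫⁻ x, d x₀ x ^ p ∂μ ≠ ∞

/-- The weak topology on measures induced by integration of bounded continuous
functions, for a given topology `τ` on the base space. -/
def weakTop [MeasurableSpace α] (τ : TopologicalSpace α) : TopologicalSpace (Measure α) :=
  TopologicalSpace.induced
    (fun μ => fun f : @BoundedContinuousFunction α ℝ τ _ => ∫ x, f x ∂μ)
    Pi.topologicalSpace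

/-- The product topology built from two explicitly given topologies. -/
def prodTop (τ₁ : TopologicalSpace α) (τ₂ : TopologicalSpace β) : TopologicalSpace (α × β) :=
  TopologicalSpace.induced Prod.fst τ₁ ⊓ TopologicalSpace.induced Prod.snd τ₂

/-- An everywhere-defined version of the disintegration kernel: it agrees with
`Measure.condKernel` on finite measures. -/
def condK [MeasurableSpace α] [MeasurableSpace β] [StandardBorelSpace β] [Nonempty β]
    (ρ : Measure (α × β)) : Kernel α β :=
  letI := Classical.dec (IsFiniteMeasure ρ)
  if h : IsFiniteMeasure ρ then @Measure.condKernel α β _ _ _ _ ρ h else 0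

/-- The disintegration map `𝒫(A × B) → 𝒫(A × 𝒫(B))`. -/
def disint [MeasurableSpace α] [MeasurableSpace β] [StandardBorelSpace β] [Nonempty β]
    (μ : Measure (α × β)) : Measure (α × Measure β) :=
  μ.map (fun z => (z.1, condK μ z.1))

/-- The intensity ("und") map `𝒫(A × 𝒫(B)) → 𝒫(A × B)`. -/
def und [MeasurableSpace α] [MeasurableSpace β] (μ : Measure (α × Measure β)) :
    Measure (α × β) :=
  μ.bind (fun z => (Measure.dirac z.1).prod z.2)

/-! ### Path spaces -/

variable {X : Type*} [MeasurableSpace X]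

/-- The path-space distance `ρ̄((x_t),(y_t)) = (∑ ρ(x_t,y_t)^p)^{1/p}`. -/
def pathDist (p : ℝ) (d : X → X → ℝ≥0∞) {N : ℕ} :
    (Fin N → X) → (Fin N → X) → ℝ≥0∞ :=
  fun x y => (∑ t, d (x t) (y t) ^ p) ^ (1 / p)

/-- The first `t` coordinates of a path. -/
def restr {N : ℕ} (t : ℕ) (h : t ≤ N) (x : Fin N → X) : Fin t → X :=
  fun s => x (Fin.castLE h s)

/-- The last `N - t` coordinates of a path. -/
def tailr {N : ℕ} (t : ℕ) (h : t ≤ N) (x : Fin N → X) : Fin (N - t) → X :=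
  fun s => x ⟨t + s.1, by have := s.2; omega⟩

/-- A coupling `π` of two path measures is causal: for every `t` and Borel
`A ⊆ 𝒳^t`, `π((Y_1,…,Y_t) ∈ A | X) = π((Y_1,…,Y_t) ∈ A | X_1,…,X_t)` a.s. -/
def Causal {N : ℕ} (π : Measure ((Fin N → X) × (Fin N → X))) : Prop :=
  ∀ (t : ℕ) (h : t ≤ N) (A : Set (Fin t → X)), MeasurableSet A →
    (π[fun z => A.indicator (fun _ => (1 : ℝ)) (restr t h z.2) |
        MeasurableSpace.comap Prod.fst inferInstance])
      =ᵐ[π]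
    (π[fun z => A.indicator (fun _ => (1 : ℝ)) (restr t h z.2) |
        MeasurableSpace.comap (fun z => restr t h z.1) inferInstance])

/-- Bicausal couplings. -/
def Bicausal {N : ℕ} (π : Measure ((Fin N → X) × (Fin N → X))) : Prop :=
  Causal π ∧ Causal (π.map Prod.swap)

/-- The causal Wasserstein "distance" `CW_p`. -/
def CW (p : ℝ) (d : X → X → ℝ≥0∞) {N : ℕ} (μ ν : Measure (Fin N → X)) : ℝ≥0∞ :=
  ⨅ π ∈ {π ∈ Cpl μ ν | Causal π}, (∫⁻ z, pathDist p d z.1 z.2 ^ p ∂π) ^ (1 / p)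

/-- The symmetrized causal Wasserstein distance `SCW_p`. -/
def SCW (p : ℝ) (d : X → X → ℝ≥0∞) {N : ℕ} (μ ν : Measure (Fin N → X)) : ℝ≥0∞ :=
  max (CW p d μ ν) (CW p d ν μ)

/-- The adapted (nested, bicausal) Wasserstein distance `AW_p`. -/
def AW (p : ℝ) (d : X → X → ℝ≥0∞) {N : ℕ} (μ ν : Measure (Fin N → X)) : ℝ≥0∞ :=
  ⨅ π ∈ {π ∈ Cpl μ ν | Bicausal π}, (∫⁻ z, pathDist p d z.1 z.2 ^ p ∂π) ^ (1 / p)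

/-! ### Nested spaces (Pflug's nested distributions / Vershik's iterated spaces) -/

/-- A measurable space together with an `ℝ≥0∞`-valued distance. -/
structure QMS : Type 1 where
  carrier : Type
  inst : MeasurableSpace carrier
  dist : carrier → carrier → ℝ≥0∞

/-- The nested sequence of spaces: `nest X _ d p 0 = 𝒳` (this is `𝒳_N`), and
`nest X _ d p (k+1) = 𝒳 × 𝒫(nest X _ d p k)` with the nested distance
`D = (ρ^p + 𝒲_p^p)^{1/p}`.  Thus `𝒳_1` (for `N = k+1` time points) is
`nest X _ d p k`. -/
def nest (X : Type) (mX : MeasurableSpace X) (d : X → X → ℝ≥0∞) (p : ℝ) : ℕ → QMS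
  | 0 => ⟨X, mX, d⟩
  | (k + 1) =>
    let Q := nest X mX d p k
    ⟨X × @Measure Q.carrier Q.inst,
      @Prod.instMeasurableSpace _ _ mX (@Measure.instMeasurableSpace _ Q.inst),
      fun a b => (d a.1 b.1 ^ p + (@Wp _ Q.inst p Q.dist a.2 b.2) ^ p) ^ (1 / p)⟩

section NMapSec

variable (Y : Type) [mY : MeasurableSpace Y] [TopologicalSpace Y] [PolishSpace Y]
  [BorelSpace Y] [Nonempty Y]

/-- The map `𝒩` sending the law of a process with `k+1` time steps to the
corresponding nested distribution, via iterated regular conditional laws. -/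
def NMap (d : Y → Y → ℝ≥0∞) (p : ℝ) :
    ∀ k : ℕ, Measure (Fin (k + 1) → Y) →
      @Measure (nest Y mY d p k).carrier (nest Y mY d p k).inst
  | 0, μ =>
    letI : MeasurableSpace (nest Y mY d p 0).carrier := (nest Y mY d p 0).inst
    μ.map (fun x => x 0)
  | (k + 1), μ =>
    letI : MeasurableSpace (nest Y mY d p k).carrier := (nest Y mY d p k).inst
    letI : MeasurableSpace (nest Y mY d p (k + 1)).carrier := (nest Y mY d p (k + 1)).inst
    (μ.map (fun x => x 0)).map
      (fun x₀ => (x₀, NMap d p k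
        ((condK (μ.map (fun x => (x 0, fun s : Fin (k + 1) => x s.succ)))) x₀)))

end NMapSec

section PathStructures

variable {Y : Type*} [mY : MeasurableSpace Y]

/-- A process `L` is adapted: `L t` depends only on the first `t+1` coordinates. -/
def AdaptedProc {N : ℕ} (L : Fin N → (Fin N → Y) → ℝ) : Prop :=
  ∀ (t : Fin N) (x y : Fin N → Y), (∀ s : Fin N, s ≤ t → x s = y s) → L t x = L t y

/-- `τ` is a stopping time of the canonical filtration on the path space. -/
def IsStopTime {N : ℕ} (τ : (Fin N → Y) → Fin N) : Prop :=
  ∀ t : Fin N,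
    MeasurableSet[MeasurableSpace.comap (restr (X := Y) (t.1 + 1) t.2) inferInstance]
      {x | τ x = t}

/-- The optimal stopping value `v^L(μ)`. -/
def stopVal {N : ℕ} (L : Fin N → (Fin N → Y) → ℝ) (μ : Measure (Fin N → Y)) : ℝ :=
  ⨅ τ : {τ : (Fin N → Y) → Fin N // IsStopTime τ}, ∫ x, L (τ.1 x) x ∂μ

variable [TopologicalSpace Y]

/-- `AC(X̄)`: adapted processes which are continuous and bounded. -/
def ACbdd {N : ℕ} (L : Fin N → (Fin N → Y) → ℝ) : Prop :=
  (∀ t, Continuous (L t)) ∧ AdaptedProc L ∧ ∃ C : ℝ, ∀ t x, |L t x| ≤ C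

/-- `AC_p(X̄)`: adapted continuous processes of growth of order `p`. -/
def ACp (p : ℝ) (d : Y → Y → ℝ≥0∞) {N : ℕ} (L : Fin N → (Fin N → Y) → ℝ) : Prop :=
  (∀ t, Continuous (L t)) ∧ AdaptedProc L ∧
    ∃ (C : ℝ) (x₀ : Fin N → Y), ∀ t x, |L t x| ≤ C * (1 + ((pathDist p d x₀ x) ^ p).toReal)

/-- The optimal stopping topology (weak version, bounded continuous rewards). -/
def stopTopW (N : ℕ) : TopologicalSpace (Measure (Fin N → Y)) :=
  ⨅ L : {L : Fin N → (Fin N → Y) → ℝ // ACbdd L},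
    TopologicalSpace.induced (stopVal L.1) inferInstance

/-- The `𝒲_p`-optimal stopping topology. -/
def stopTopWp (p : ℝ) (d : Y → Y → ℝ≥0∞) (N : ℕ) :
    TopologicalSpace (Measure (Fin N → Y)) :=
  ⨅ L : {L : Fin N → (Fin N → Y) → ℝ // ACp p d L},
    TopologicalSpace.induced (stopVal L.1) inferInstance

variable [PolishSpace Y] [BorelSpace Y] [Nonempty Y]

/-- Hellwig's map `I_t`, sending `μ` to the joint law of the first `t`
coordinates together with the conditional law of the remaining coordinates. -/
def infoMap (N t : ℕ) (h : t ≤ N) (μ : Measure (Fin N → Y)) :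
    Measure ((Fin t → Y) × Measure (Fin (N - t) → Y)) :=
  μ.map (fun x => (restr t h x,
    condK (μ.map (fun y => (restr t h y, tailr t h y))) (restr t h x)))

/-- Hellwig's information topology (weak version). -/
def infoTopW (N : ℕ) : TopologicalSpace (Measure (Fin N → Y)) :=
  ⨅ (t : ℕ) (_ : 1 ≤ t) (h : t ≤ N - 1),
    TopologicalSpace.induced (infoMap N t (le_trans h (Nat.sub_le N 1)))
      (weakTop (prodTop Pi.topologicalSpace (weakTop Pi.topologicalSpace)))

/-- The `𝒲_p`-information topology. -/
def infoTopWp (p : ℝ) (d : Y → Y → ℝ≥0∞) (N : ℕ) :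
    TopologicalSpace (Measure (Fin N → Y)) :=
  ⨅ (t : ℕ) (_ : 1 ≤ t) (h : t ≤ N - 1),
    TopologicalSpace.induced (infoMap N t (le_trans h (Nat.sub_le N 1)))
      (ballTop (Wp p (prodDist p (pathDist p d) (Wp p (pathDist p d)))))

/-- Aldous' prediction process `Z_t^μ` (as a function of the path). -/
def predict (N : ℕ) (μ : Measure (Fin N → Y)) (t : ℕ) (h : t ≤ N) :
    (Fin N → Y) → Measure (Fin N → Y) :=
  fun x => condK (μ.map (fun y => (restr t h y, y))) (restr t h x)

/-- Aldous' map `E`, sending `μ` to the joint law of the path together with its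
prediction process. -/
def aldousMap (N : ℕ) (μ : Measure (Fin N → Y)) :
    Measure ((Fin N → Y) × (Fin (N + 1) → Measure (Fin N → Y))) :=
  μ.map (fun x =>
    (x, fun t : Fin (N + 1) => predict N μ t.1 (Nat.lt_succ_iff.mp t.2) x))

/-- Aldous' extended weak topology. -/
def aldousTopW (N : ℕ) : TopologicalSpace (Measure (Fin N → Y)) :=
  TopologicalSpace.induced (aldousMap N)
    (weakTop (prodTop Pi.topologicalSpace
      (@Pi.topologicalSpace (Fin (N + 1)) (fun _ => Measure (Fin N → Y))
        (fun _ => weakTop Pi.topologicalSpace))))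

/-- The extended `𝒲_p`-topology. -/
def aldousTopWp (p : ℝ) (d : Y → Y → ℝ≥0∞) (N : ℕ) :
    TopologicalSpace (Measure (Fin N → Y)) :=
  TopologicalSpace.induced (aldousMap N)
    (ballTop (Wp p (prodDist p (pathDist p d)
      (fun Z Z' : Fin (N + 1) → Measure (Fin N → Y) =>
        (∑ t, Wp p (pathDist p d) (Z t) (Z' t) ^ p) ^ (1 / p)))))

end PathStructures

/-! ### The lifted two-time-point space `𝒳₁ × 𝒫_p(𝒳₂)` -/

section Lifted

variable {A B : Type*} [MeasurableSpace A] [MeasurableSpace B]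

/-- The nested distance on `𝒳₁ × 𝒫_p(𝒳₂)`. -/
def liftDist (p : ℝ) (dA : A → A → ℝ≥0∞) (dB : B → B → ℝ≥0∞) :
    (A × Measure B) → (A × Measure B) → ℝ≥0∞ :=
  fun u v => (dA u.1 v.1 ^ p + Wp p dB u.2 v.2 ^ p) ^ (1 / p)

/-- `η` is a version of the measure-valued conditional expectation
`E_γ[X̂₂ | Y⃗]` (i.e. the barycenter of a regular conditional law of `X̂₂`
given `Y⃗ = (Y₁, Ŷ₂)`). -/
def IsCondBar (γ : Measure ((A × Measure B) × (A × Measure B)))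
    (η : (A × Measure B) × (A × Measure B) → Measure B) : Prop :=
  (∃ g : (A × Measure B) → Measure B, Measurable g ∧ ∀ z, η z = g z.2) ∧
  (∀ z, IsProbabilityMeasure (η z)) ∧
  ∀ S : Set (A × Measure B), MeasurableSet S → ∀ E : Set B, MeasurableSet E →
    ∫⁻ z in {z | z.2 ∈ S}, η z E ∂γ = ∫⁻ z in {z | z.2 ∈ S}, z.1.2 E ∂γ

/-- `AW̄_p`, the `p`-Wasserstein distance on `𝒫_p(𝒳₁ × 𝒫_p(𝒳₂))`. -/
def AWbar (p : ℝ) (dA : A → A → ℝ≥0∞) (dB : B → B → ℝ≥0∞)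
    (μ ν : Measure (A × Measure B)) : ℝ≥0∞ :=
  Wp p (liftDist p dA dB) μ ν

/-- `CW̄_p`, the lifted causal Wasserstein "distance". -/
def CWbar (p : ℝ) (dA : A → A → ℝ≥0∞) (dB : B → B → ℝ≥0∞)
    (μ ν : Measure (A × Measure B)) : ℝ≥0∞ :=
  ⨅ γ ∈ Cpl μ ν, ⨅ η ∈ {η | IsCondBar γ η},
    (∫⁻ z, (dA z.1.1 z.2.1 ^ p + Wp p dB (η z) z.2.2 ^ p) ∂γ) ^ (1 / p)

/-- `SCW̄_p`, the symmetrization of `CW̄_p`. -/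
def SCWbar (p : ℝ) (dA : A → A → ℝ≥0∞) (dB : B → B → ℝ≥0∞)
    (μ ν : Measure (A × Measure B)) : ℝ≥0∞ :=
  max (CWbar p dA dB μ ν) (CWbar p dA dB ν μ)

/-- Membership in `𝒫_p(𝒳₁ × 𝒫_p(𝒳₂))`: a probability measure, concentrated on
`𝒳₁ × 𝒫_p(𝒳₂)`, with finite `p`-th moment for the nested distance. -/
def MemPpLift (p : ℝ) (dA : A → A → ℝ≥0∞) (dB : B → B → ℝ≥0∞)
    (μ : Measure (A × Measure B)) : Prop :=
  IsProbabilityMeasure μ ∧ (∀ᵐ z ∂μ, MemPp p dB z.2) ∧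
    ∃ z₀ : A × Measure B, MemPp p dB z₀.2 ∧ ∫⁻ z, liftDist p dA dB z₀ z ^ p ∂μ ≠ ∞

/-- Two-time-point causality: given a coupling `π` of measures on products
`A₁ × B₁` and `A₂ × B₂`, the conditional law of `Y₁` given `X = (X₁, X₂)`
coincides with the conditional law of `Y₁` given `X₁`. -/
def Causal2 {A₁ B₁ A₂ B₂ : Type*} [MeasurableSpace A₁] [MeasurableSpace B₁]
    [MeasurableSpace A₂] [MeasurableSpace B₂]
    (π : Measure ((A₁ × B₁) × (A₂ × B₂))) : Prop :=
  ∀ S : Set A₂, MeasurableSet S →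
    (π[fun z => S.indicator (fun _ => (1 : ℝ)) z.2.1 |
        MeasurableSpace.comap Prod.fst inferInstance])
      =ᵐ[π]
    (π[fun z => S.indicator (fun _ => (1 : ℝ)) z.2.1 |
        MeasurableSpace.comap (fun z => z.1.1) inferInstance])

/-- The two-time-point causal Wasserstein "distance" on `𝒫_p(𝒳₁ × 𝒳₂)`. -/
def CW2 (p : ℝ) (dA : A → A → ℝ≥0∞) (dB : B → B → ℝ≥0∞)
    (μ ν : Measure (A × B)) : ℝ≥0∞ :=
  ⨅ π ∈ {π ∈ Cpl μ ν | Causal2 π},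
    (∫⁻ z, (dA z.1.1 z.2.1 ^ p + dB z.1.2 z.2.2 ^ p) ∂π) ^ (1 / p)

end Lifted

/-!
A pair in `D` consists of graph measures: `μ'` is carried by the graph of a Markov kernel
`γ : A → 𝒫(B)` with first marginal `α`, and `μ` by the graph of a map `G : A × B → Y` over `α ⊗ₘ γ`.
The disintegration of `μ` is carried by the graph of `a ↦ law of (b, G (a, b))` for `b ∼ γ a`.

Fix the reference pair `(γ₀, G₀)`. As `Y` embeds isometrically in a Banach space, `G₀` can be
approximated in `L^p` by a Lipschitz map `g`. The defect `φ (z, y) = ‖y - g z‖` is Lipschitz and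
bounds the distance between any two points of `Y` by `C * edist z z' + φ (z, y) + φ (z', y')`. Its
`L^p` norm is small under `μ₀`, hence, by the Kantorovich estimate, also under every `μ` close to
`μ₀`. Transporting `γ₀ a` to `γ a'` therefore also transports the laws of `(b, G₀ (a, b))` and
`(b, G (a', b))` to each other, at a cost that integrates to little more than a constant multiple of
the distance between the two pairs.

The topology on the target is generated by balls with arbitrary centres `θ`, and `Wp` is a lower
integral, so the triangle inequality through the reference disintegration requires that
`(a, a') ↦ Wp (γ₀ a) (γ a')` be almost everywhere measurable. This is reduced to countable spaces,
where `Wp ^ p` is an infimum over the countably many partial couplings with rational weights.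
-/

section LowerLpNorm

variable [MeasurableSpace α] [MeasurableSpace β] {μ : Measure α} {p : ℝ}

/-- The `L^p` norm of an `ℝ≥0∞`-valued function, which is not required to be measurable: the
integral is a lower integral.  It is the form in which transport costs are compared, because
Wasserstein distances between measures are not known to be measurable a priori. -/
def lowerLpNorm (p : ℝ) (f : α → ℝ≥0∞) (μ : Measure α) : ℝ≥0∞ :=
  (∫⁻ x, f x ^ p ∂μ) ^ (1 / p)

lemma rpow_rpow_one_div (hp : 1 ≤ p) (x : ℝ≥0∞) : (x ^ p) ^ (1 / p) = x := by
  rw [← ENNReal.rpow_mul, mul_one_div_cancel (by positivity), ENNReal.rpow_one]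

lemma rpow_one_div_rpow (hp : 1 ≤ p) (x : ℝ≥0∞) : (x ^ (1 / p)) ^ p = x := by
  rw [← ENNReal.rpow_mul, one_div_mul_cancel (by positivity), ENNReal.rpow_one]

lemma lowerLpNorm_rpow (hp : 1 ≤ p) (f : α → ℝ≥0∞) (μ : Measure α) :
    lowerLpNorm p f μ ^ p = ∫⁻ x, f x ^ p ∂μ :=
  rpow_one_div_rpow hp _

lemma lowerLpNorm_mono_ae (hp : 1 ≤ p) {f g : α → ℝ≥0∞} (h : ∀ᵐ x ∂μ, f x ≤ g x) :
    lowerLpNorm p f μ ≤ lowerLpNorm p g μ :=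
  ENNReal.rpow_le_rpow
    (lintegral_mono_ae <| h.mono fun _ hx => ENNReal.rpow_le_rpow hx (by positivity))
    (by positivity)

lemma lowerLpNorm_mono (hp : 1 ≤ p) {f g : α → ℝ≥0∞} (h : ∀ x, f x ≤ g x) :
    lowerLpNorm p f μ ≤ lowerLpNorm p g μ :=
  lowerLpNorm_mono_ae hp (ae_of_all _ h)

lemma lowerLpNorm_const (hp : 1 ≤ p) [IsProbabilityMeasure μ] (c : ℝ≥0∞) :
    lowerLpNorm p (fun _ => c) μ = c := by
  simp only [lowerLpNorm, lintegral_const, measure_univ, mul_one, rpow_rpow_one_div hp]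

lemma lowerLpNorm_zero (hp : 1 ≤ p) : lowerLpNorm p 0 μ = 0 := by
  have hp0 : 0 < p := by positivity
  simp [lowerLpNorm, hp0]

lemma lowerLpNorm_const_mul (hp : 1 ≤ p) (f : α → ℝ≥0∞) {c : ℝ≥0∞} (hc : c ≠ ∞) :
    lowerLpNorm p (fun x => c * f x) μ = c * lowerLpNorm p f μ := by
  have hp0 : 0 ≤ p := by positivity
  simp only [lowerLpNorm, ENNReal.mul_rpow_of_nonneg _ _ hp0,
    lintegral_const_mul' _ _ (ENNReal.rpow_ne_top_of_nonneg hp0 hc),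
    ENNReal.mul_rpow_of_nonneg _ _ (one_div_nonneg.2 hp0), rpow_rpow_one_div hp]

lemma lowerLpNorm_map {f : β → ℝ≥0∞} {g : α → β} (hf : Measurable f) (hg : Measurable g) :
    lowerLpNorm p f (μ.map g) = lowerLpNorm p (f ∘ g) μ := by
  simp only [lowerLpNorm, lintegral_map (hf.pow_const p) hg, Function.comp_apply]

lemma lowerLpNorm_map_le (hp : 1 ≤ p) (f : β → ℝ≥0∞) (g : α → β) :
    lowerLpNorm p f (μ.map g) ≤ lowerLpNorm p (f ∘ g) μ :=
  ENNReal.rpow_le_rpow (lintegral_map_le _ _) (by positivity)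

/-- Minkowski's inequality; it fails for lower integrals if neither function is measurable. -/
lemma lowerLpNorm_add_le (hp : 1 ≤ p) (f : α → ℝ≥0∞) {g : α → ℝ≥0∞} (hg : AEMeasurable g μ) :
    lowerLpNorm p (fun x => f x + g x) μ ≤ lowerLpNorm p f μ + lowerLpNorm p g μ := by
  obtain ⟨h, hm, hle, heq⟩ := exists_measurable_le_lintegral_eq μ (fun x => (f x + g x) ^ p)
  have hsub_le : ∀ x, h x ^ (1 / p) - g x ≤ f x := fun x => by
    rw [tsub_le_iff_right, ← rpow_rpow_one_div hp (f x + g x)]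
    gcongr
    exact hle x
  have hh : ∀ x, h x ≤ ((h x ^ (1 / p) - g x) + g x) ^ p := fun x => by
    conv_lhs => rw [← rpow_one_div_rpow hp (h x)]
    gcongr
    exact le_tsub_add
  calc lowerLpNorm p (fun x => f x + g x) μ
      ≤ lowerLpNorm p (fun x => (h x ^ (1 / p) - g x) + g x) μ := by
        rw [lowerLpNorm, heq, lowerLpNorm]
        gcongr with x
        exact hh x
    _ ≤ lowerLpNorm p (fun x => h x ^ (1 / p) - g x) μ + lowerLpNorm p g μ :=
        ENNReal.lintegral_Lp_add_le ((hm.pow_const _).aemeasurable.sub hg) hg hp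
    _ ≤ lowerLpNorm p f μ + lowerLpNorm p g μ := by
        gcongr
        exact lowerLpNorm_mono hp hsub_le

lemma lintegral_fst_compProd_le (μ : Measure α) [SFinite μ] (κ : Kernel α β) [IsMarkovKernel κ]
    (f : α → ℝ≥0∞) : ∫⁻ z, f z.1 ∂(μ ⊗ₘ κ) ≤ ∫⁻ x, f x ∂μ := by
  obtain ⟨h, hm, hle, heq⟩ := exists_measurable_le_lintegral_eq (μ ⊗ₘ κ) (fun z => f z.1)
  rw [heq, Measure.lintegral_compProd hm]
  refine lintegral_mono fun x => ?_
  calc ∫⁻ y, h (x, y) ∂κ x ≤ ∫⁻ _, f x ∂κ x := lintegral_mono fun y => hle (x, y)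
    _ = f x := by simp

lemma lowerLpNorm_fst_compProd_le (hp : 1 ≤ p) (μ : Measure α) [SFinite μ] (κ : Kernel α β)
    [IsMarkovKernel κ] (f : α → ℝ≥0∞) :
    lowerLpNorm p (fun z => f z.1) (μ ⊗ₘ κ) ≤ lowerLpNorm p f μ :=
  ENNReal.rpow_le_rpow (lintegral_fst_compProd_le μ κ fun x => f x ^ p) (by positivity)

end LowerLpNorm

section Coupling

variable {γ : Type*} [MeasurableSpace α] [MeasurableSpace β] [MeasurableSpace γ] {p : ℝ}

lemma isProbabilityMeasure_of_mem_Cpl {μ : Measure α} {ν : Measure β} {π : Measure (α × β)}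
    [IsProbabilityMeasure μ] (hπ : π ∈ Cpl μ ν) : IsProbabilityMeasure π :=
  have : IsProbabilityMeasure (π.map Prod.fst) := hπ.1.symm ▸ inferInstance
  Measure.isProbabilityMeasure_of_map Prod.fst

lemma map_prodMap_mem_Cpl {α' β' : Type*} [MeasurableSpace α'] [MeasurableSpace β']
    {μ : Measure α} {ν : Measure β} {π : Measure (α × β)} (hπ : π ∈ Cpl μ ν)
    {f : α → α'} {g : β → β'} (hf : Measurable f) (hg : Measurable g) :
    π.map (Prod.map f g) ∈ Cpl (μ.map f) (ν.map g) := by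
  constructor
  · rw [← hπ.1, Measure.map_map measurable_fst (by fun_prop), Measure.map_map hf measurable_fst]
    rfl
  · rw [← hπ.2, Measure.map_map measurable_snd (by fun_prop), Measure.map_map hg measurable_snd]
    rfl

lemma map_prodMk_mem_Cpl {μ : Measure α} {f : α → β} {g : α → γ} (hf : Measurable f)
    (hg : Measurable g) : μ.map (fun x => (f x, g x)) ∈ Cpl (μ.map f) (μ.map g) :=
  ⟨Measure.fst_map_prodMk hg, Measure.snd_map_prodMk hf⟩

lemma lowerLpNorm_mul_add_add_le_of_mem_Cpl (hp : 1 ≤ p) {μ : Measure α} {ν : Measure β}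
    {π : Measure (α × β)} (hπ : π ∈ Cpl μ ν) (c : α × β → ℝ≥0∞) {C : ℝ≥0∞} (hC : C ≠ ∞)
    {m : α → ℝ≥0∞} (hm : Measurable m) {n : β → ℝ≥0∞} (hn : Measurable n) :
    lowerLpNorm p (fun z => C * c z + m z.1 + n z.2) π ≤
      C * lowerLpNorm p c π + lowerLpNorm p m μ + lowerLpNorm p n ν := by
  have hm' : lowerLpNorm p (fun z => m z.1) π = lowerLpNorm p m μ := by
    rw [← hπ.1, lowerLpNorm_map hm measurable_fst, Function.comp_def]
  have hn' : lowerLpNorm p (fun z => n z.2) π = lowerLpNorm p n ν := by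
    rw [← hπ.2, lowerLpNorm_map hn measurable_snd, Function.comp_def]
  rw [← hm', ← hn', ← lowerLpNorm_const_mul hp c hC]
  exact (lowerLpNorm_add_le hp _ (hn.comp measurable_snd).aemeasurable).trans
    (add_le_add_left (lowerLpNorm_add_le hp _ (hm.comp measurable_fst).aemeasurable) _)

/-- The gluing of a measure on `α × β` with one on `β × γ`, conditionally independent given the
common coordinate. -/
def glue [StandardBorelSpace γ] [Nonempty γ] (π : Measure (α × β)) (σ : Measure (β × γ))
    [IsFiniteMeasure σ] : Measure ((α × β) × γ) :=
  π ⊗ₘ σ.condKernel.comap Prod.snd measurable_snd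

lemma map_glue_of_snd_eq_fst [StandardBorelSpace γ] [Nonempty γ] {π : Measure (α × β)}
    {σ : Measure (β × γ)} [IsFiniteMeasure π] [IsFiniteMeasure σ]
    (h : π.map Prod.snd = σ.map Prod.fst) :
    (glue π σ).map (fun t => (t.1.2, t.2)) = σ := by
  conv_rhs => rw [← σ.disintegrate σ.condKernel, Measure.fst, ← h]
  ext s hs
  rw [Measure.map_apply (by fun_prop) hs, glue, Measure.compProd_apply
      ((show Measurable (fun t : (α × β) × γ => (t.1.2, t.2)) by fun_prop) hs),
    Measure.compProd_apply hs,
    lintegral_map (Kernel.measurable_kernel_prodMk_left hs) measurable_snd]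
  rfl

/-- Gluing at the level of costs, where only the cost of the second coupling is measurable. -/
lemma exists_mem_Cpl_lowerLpNorm_le_add [StandardBorelSpace γ] [Nonempty γ] (hp : 1 ≤ p)
    {μ₁ : Measure α} {μ₂ : Measure β} {μ₃ : Measure γ} [IsProbabilityMeasure μ₂]
    {π : Measure (α × β)} {σ : Measure (β × γ)} (hπ : π ∈ Cpl μ₁ μ₂) (hσ : σ ∈ Cpl μ₂ μ₃)
    {c₁₂ : α × β → ℝ≥0∞} {c₂₃ : β × γ → ℝ≥0∞} {c₁₃ : α × γ → ℝ≥0∞} (hc : AEMeasurable c₂₃ σ)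
    (htri : ∀ x y z, c₁₃ (x, z) ≤ c₁₂ (x, y) + c₂₃ (y, z)) :
    ∃ ρ ∈ Cpl μ₁ μ₃, lowerLpNorm p c₁₃ ρ ≤ lowerLpNorm p c₁₂ π + lowerLpNorm p c₂₃ σ := by
  have : IsProbabilityMeasure σ := isProbabilityMeasure_of_mem_Cpl hσ
  have : IsProbabilityMeasure (π.map Prod.snd) := hπ.2.symm ▸ inferInstance
  have : IsProbabilityMeasure π := Measure.isProbabilityMeasure_of_map Prod.snd
  have hfst : (glue π σ).map Prod.fst = π := Measure.fst_compProd _ _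
  have hsnd : (glue π σ).map (fun t => (t.1.2, t.2)) = σ :=
    map_glue_of_snd_eq_fst (hπ.2.trans hσ.1.symm)
  have h23 : Measurable fun t : (α × β) × γ => (t.1.2, t.2) := by fun_prop
  refine ⟨(glue π σ).map fun t => (t.1.1, t.2), ⟨?_, ?_⟩, ?_⟩
  · rw [Measure.map_map measurable_fst (by fun_prop), ← hπ.1]
    exact (Measure.map_map measurable_fst measurable_fst).symm.trans (congrArg _ hfst)
  · rw [Measure.map_map measurable_snd (by fun_prop), ← hσ.2]
    exact (Measure.map_map measurable_snd h23).symm.trans (congrArg _ hsnd)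
  · have hc' : AEMeasurable c₂₃ ((glue π σ).map fun t => (t.1.2, t.2)) := hsnd.symm ▸ hc
    calc lowerLpNorm p c₁₃ ((glue π σ).map fun t => (t.1.1, t.2))
        ≤ lowerLpNorm p (fun t => c₁₃ (t.1.1, t.2)) (glue π σ) := lowerLpNorm_map_le hp _ _
      _ ≤ lowerLpNorm p (fun t => c₁₂ t.1 + c₂₃ (t.1.2, t.2)) (glue π σ) :=
        lowerLpNorm_mono hp fun t => htri _ _ _
      _ ≤ lowerLpNorm p (fun t => c₁₂ t.1) (glue π σ)
          + lowerLpNorm p (fun t => c₂₃ (t.1.2, t.2)) (glue π σ) :=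
        lowerLpNorm_add_le hp _ (hc'.comp_measurable h23)
      _ ≤ lowerLpNorm p c₁₂ π + lowerLpNorm p c₂₃ σ := by
        gcongr
        · exact lowerLpNorm_fst_compProd_le hp _ _ _
        · conv_rhs => rw [← hsnd, lowerLpNorm, lintegral_map' (hc'.pow_const p) h23.aemeasurable]
          rfl

end Coupling

section Wasserstein

variable [MeasurableSpace α] [MeasurableSpace β] {p : ℝ} {d : α → α → ℝ≥0∞} {μ ν : Measure α}

lemma Wp_le_lowerLpNorm {π : Measure (α × α)} (hπ : π ∈ Cpl μ ν) :
    Wp p d μ ν ≤ lowerLpNorm p (fun z => d z.1 z.2) π :=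
  iInf₂_le π hπ

lemma Wp_map_map_le_lowerLpNorm (hp : 1 ≤ p) {f g : β → α} (hf : Measurable f) (hg : Measurable g)
    (μ : Measure β) :
    Wp p d (μ.map f) (μ.map g) ≤ lowerLpNorm p (fun x => d (f x) (g x)) μ :=
  (Wp_le_lowerLpNorm (map_prodMk_mem_Cpl hf hg)).trans (lowerLpNorm_map_le hp _ _)

lemma Wp_map_map_le_of_forall_le (hp : 1 ≤ p) {f g : β → α} (hf : Measurable f)
    (hg : Measurable g) {r : ℝ≥0∞} (h : ∀ x, d (f x) (g x) ≤ r) (μ : Measure β)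
    [IsProbabilityMeasure μ] : Wp p d (μ.map f) (μ.map g) ≤ r :=
  (Wp_map_map_le_lowerLpNorm hp hf hg μ).trans
    ((lowerLpNorm_mono hp h).trans_eq (lowerLpNorm_const hp r))

lemma Wp_self (hp : 1 ≤ p) (hd : ∀ᵐ x ∂μ, d x x = 0) : Wp p d μ μ = 0 := by
  have hle : Wp p d μ μ ≤ lowerLpNorm p (fun x => d x x) μ := by
    simpa using Wp_map_map_le_lowerLpNorm (d := d) hp measurable_id measurable_id μ
  exact nonpos_iff_eq_zero.1 <| hle.trans <|
    (lowerLpNorm_mono_ae hp (hd.mono fun _ hx => hx.le)).trans_eq (lowerLpNorm_zero hp)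

lemma Wp_triangle [StandardBorelSpace α] [Nonempty α] (hp : 1 ≤ p)
    (hd : Measurable fun z : α × α => d z.1 z.2) (htri : ∀ x y z, d x z ≤ d x y + d y z)
    (μ₁ μ₂ μ₃ : Measure α) [IsProbabilityMeasure μ₂] :
    Wp p d μ₁ μ₃ ≤ Wp p d μ₁ μ₂ + Wp p d μ₂ μ₃ := by
  conv_rhs => unfold Wp
  simp only [ENNReal.iInf_add, ENNReal.add_iInf]
  refine le_iInf₂ fun σ hσ => le_iInf₂ fun π hπ => ?_
  obtain ⟨ρ, hρ, hle⟩ := exists_mem_Cpl_lowerLpNorm_le_add hp hπ hσ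
    hd.aemeasurable (c₁₂ := fun z => d z.1 z.2) (c₁₃ := fun z => d z.1 z.2) htri
  exact (Wp_le_lowerLpNorm hρ).trans hle

lemma Wp_map_map_le_mul_add (hp : 1 ≤ p) {d' : β → β → ℝ≥0∞} {f g : α → β} (hf : Measurable f)
    (hg : Measurable g) {C : ℝ≥0∞} (hC₀ : C ≠ 0) (hC : C ≠ ∞) {m n : α → ℝ≥0∞} (hm : Measurable m)
    (hn : Measurable n) {r : ℝ≥0∞} (h : ∀ x y, d' (f x) (g y) ≤ C * d x y + m x + n y + r)
    [IsProbabilityMeasure μ] :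
    Wp p d' (μ.map f) (ν.map g) ≤
      C * Wp p d μ ν + lowerLpNorm p m μ + lowerLpNorm p n ν + r := by
  rw [Wp.eq_1 p d]
  simp only [ENNReal.mul_iInf_of_ne hC₀ hC, ENNReal.iInf_add]
  refine le_iInf₂ fun π hπ => ?_
  have : IsProbabilityMeasure π := isProbabilityMeasure_of_mem_Cpl hπ
  calc Wp p d' (μ.map f) (ν.map g)
      ≤ lowerLpNorm p (fun z => d' (f z.1) (g z.2)) π :=
        (Wp_le_lowerLpNorm (map_prodMap_mem_Cpl hπ hf hg)).trans (lowerLpNorm_map_le hp _ _)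
    _ ≤ lowerLpNorm p (fun z => C * d z.1 z.2 + m z.1 + n z.2 + r) π :=
        lowerLpNorm_mono hp fun z => h _ _
    _ ≤ lowerLpNorm p (fun z => C * d z.1 z.2 + m z.1 + n z.2) π + lowerLpNorm p (fun _ => r) π :=
        lowerLpNorm_add_le hp _ aemeasurable_const
    _ ≤ C * lowerLpNorm p (fun z => d z.1 z.2) π + lowerLpNorm p m μ + lowerLpNorm p n ν + r := by
        rw [lowerLpNorm_const hp]
        grw [lowerLpNorm_mul_add_add_le_of_mem_Cpl hp hπ _ hC hm hn]

lemma Wp_map_map_le (hp : 1 ≤ p) {d' : β → β → ℝ≥0∞} {f : α → β} (hf : Measurable f) {r : ℝ≥0∞}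
    (hr : ∀ x y, d' (f x) (f y) ≤ d x y + r) [IsProbabilityMeasure μ] :
    Wp p d' (μ.map f) (ν.map f) ≤ Wp p d μ ν + r := by
  simpa only [one_mul, lowerLpNorm_zero hp, add_zero] using
    Wp_map_map_le_mul_add hp hf hf one_ne_zero one_ne_top measurable_zero measurable_zero
      (fun x y => by simpa only [one_mul, Pi.zero_apply, add_zero] using hr x y)

/-- The Kantorovich estimate for `L^p` norms of Lipschitz functions. -/
lemma lowerLpNorm_le_add_mul_Wp (hp : 1 ≤ p) {f : α → ℝ≥0∞} (hf : Measurable f) {C : ℝ≥0∞}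
    (hC₀ : C ≠ 0) (hC : C ≠ ∞) (hle : ∀ x y, f y ≤ f x + C * d x y) :
    lowerLpNorm p f ν ≤ lowerLpNorm p f μ + C * Wp p d μ ν := by
  rw [Wp]
  simp only [ENNReal.mul_iInf_of_ne hC₀ hC, ENNReal.add_iInf]
  refine le_iInf₂ fun π hπ => ?_
  calc lowerLpNorm p f ν = lowerLpNorm p (fun z => f z.2) π := by
        rw [← hπ.2, lowerLpNorm_map hf measurable_snd, Function.comp_def]
    _ ≤ lowerLpNorm p (fun z => C * d z.1 z.2 + f z.1) π :=
        lowerLpNorm_mono hp fun z => (hle _ _).trans_eq (add_comm _ _)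
    _ ≤ lowerLpNorm p (fun z => C * d z.1 z.2) π + lowerLpNorm p (fun z => f z.1) π :=
        lowerLpNorm_add_le hp _ (hf.comp measurable_fst).aemeasurable
    _ = lowerLpNorm p f μ + C * lowerLpNorm p (fun z => d z.1 z.2) π := by
        rw [lowerLpNorm_const_mul hp _ hC, add_comm, ← hπ.1, lowerLpNorm_map hf measurable_fst,
          Function.comp_def]

end Wasserstein

section PartialCoupling

variable [MeasurableSpace α] [MeasurableSpace β]

lemma inv_smul_prod_mem_Cpl {μ : Measure α} {ν : Measure β} [IsFiniteMeasure μ]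
    [IsFiniteMeasure ν] (h : μ Set.univ = ν Set.univ) :
    (μ Set.univ)⁻¹ • μ.prod ν ∈ Cpl μ ν := by
  rcases eq_or_ne (μ Set.univ) 0 with h₀ | h₀
  · obtain rfl : μ = 0 := Measure.measure_univ_eq_zero.1 h₀
    obtain rfl : ν = 0 := Measure.measure_univ_eq_zero.1 (h ▸ h₀)
    simp [Cpl]
  · have hcancel : (μ Set.univ)⁻¹ * μ Set.univ = 1 :=
      ENNReal.inv_mul_cancel h₀ (measure_ne_top _ _)
    constructor
    · rw [Measure.map_smul, Measure.map_fst_prod, smul_smul, ← h, hcancel, one_smul]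
    · rw [Measure.map_smul, Measure.map_snd_prod, smul_smul, hcancel, one_smul]

lemma lintegral_add_of_mem_Cpl {μ : Measure α} {ν : Measure β} {π : Measure (α × β)}
    (hπ : π ∈ Cpl μ ν) {E : α → ℝ≥0∞} {E' : β → ℝ≥0∞} (hE : Measurable E) (hE' : Measurable E') :
    ∫⁻ z, (E z.1 + E' z.2) ∂π = ∫⁻ x, E x ∂μ + ∫⁻ y, E' y ∂ν := by
  rw [← hπ.1, ← hπ.2, lintegral_map hE measurable_fst, lintegral_map hE' measurable_snd]
  exact lintegral_add_left (hE.comp measurable_fst) _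

lemma lintegral_sub_measure {μ ν : Measure α} [IsFiniteMeasure ν] (h : ν ≤ μ) {f : α → ℝ≥0∞}
    (hf : ∫⁻ x, f x ∂μ ≠ ∞) : ∫⁻ x, f x ∂(μ - ν) = ∫⁻ x, f x ∂μ - ∫⁻ x, f x ∂ν := by
  refine ENNReal.eq_sub_of_add_eq (ne_top_of_le_ne_top hf (lintegral_mono' h le_rfl)) ?_
  rw [← lintegral_add_measure, Measure.sub_add_cancel_of_le h]

/-- A partial coupling is completed by transporting the residual masses independently. -/
lemma exists_mem_Cpl_lintegral_le_of_marginals_le {μ : Measure α} {ν : Measure β}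
    [IsProbabilityMeasure μ] [IsProbabilityMeasure ν] {σ : Measure (α × β)}
    (hfst : σ.map Prod.fst ≤ μ) (hsnd : σ.map Prod.snd ≤ ν) {D : α × β → ℝ≥0∞} {E : α → ℝ≥0∞}
    {E' : β → ℝ≥0∞} (hE : Measurable E) (hE' : Measurable E') (hD : ∀ x y, D (x, y) ≤ E x + E' y)
    (hμ : ∫⁻ x, E x ∂μ ≠ ∞) (hν : ∫⁻ y, E' y ∂ν ≠ ∞) :
    ∃ π ∈ Cpl μ ν, ∫⁻ z, D z ∂π ≤ ∫⁻ z, D z ∂σ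
      + (∫⁻ x, E x ∂μ - ∫⁻ x, E x ∂(σ.map Prod.fst))
      + (∫⁻ y, E' y ∂ν - ∫⁻ y, E' y ∂(σ.map Prod.snd)) := by
  have : IsFiniteMeasure (σ.map Prod.fst) := isFiniteMeasure_of_le μ hfst
  have : IsFiniteMeasure (σ.map Prod.snd) := isFiniteMeasure_of_le ν hsnd
  have hmass : (μ - σ.map Prod.fst) Set.univ = (ν - σ.map Prod.snd) Set.univ := by
    rw [Measure.sub_apply .univ hfst, Measure.sub_apply .univ hsnd,
      Measure.map_apply measurable_fst .univ, Measure.map_apply measurable_snd .univ]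
    simp
  obtain ⟨hres_fst, hres_snd⟩ := inv_smul_prod_mem_Cpl hmass
  refine ⟨((μ - σ.map Prod.fst) Set.univ)⁻¹ • (μ - σ.map Prod.fst).prod (ν - σ.map Prod.snd) + σ,
    ⟨?_, ?_⟩, ?_⟩
  · rw [Measure.map_add _ _ measurable_fst, hres_fst, Measure.sub_add_cancel_of_le hfst]
  · rw [Measure.map_add _ _ measurable_snd, hres_snd, Measure.sub_add_cancel_of_le hsnd]
  · rw [lintegral_add_measure, add_comm, add_assoc, ← lintegral_sub_measure hfst hμ,
      ← lintegral_sub_measure hsnd hν]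
    gcongr
    exact (lintegral_mono fun z : α × β => hD z.1 z.2).trans_eq
      (lintegral_add_of_mem_Cpl ⟨hres_fst, hres_snd⟩ hE hE')

end PartialCoupling

section RationalMeasure

variable {ι : Type*} [MeasurableSpace ι]

/-- The finitely supported measure with rational weights given by (the positive part of) `q`.
On a countable space these countably many measures suffice to approximate any finite measure
from below. -/
def ratMeasure (q : ι →₀ ℚ) : Measure ι :=
  Measure.sum fun i => ENNReal.ofReal (q i) • Measure.dirac i

variable [MeasurableSingletonClass ι]

lemma lintegral_ratMeasure (q : ι →₀ ℚ) (f : ι → ℝ≥0∞) :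
    ∫⁻ i, f i ∂(ratMeasure q) = ∑' i, ENNReal.ofReal (q i) * f i := by
  simp [ratMeasure, lintegral_sum_measure, lintegral_smul_measure]

lemma ratMeasure_singleton (q : ι →₀ ℚ) (i : ι) : ratMeasure q {i} = ENNReal.ofReal (q i) := by
  rw [← lintegral_indicator_one (measurableSet_singleton i), lintegral_ratMeasure,
    tsum_eq_single i fun j hj => by simp [hj]]
  simp

variable [Countable ι]

lemma le_iff_forall_singleton_le {μ ν : Measure ι} : μ ≤ ν ↔ ∀ i, μ {i} ≤ ν {i} := by
  refine ⟨fun h i => h {i}, fun h => Measure.le_iff.2 fun s _ => ?_⟩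
  rw [← Measure.tsum_indicator_apply_singleton μ s (Set.to_countable s).measurableSet,
    ← Measure.tsum_indicator_apply_singleton ν s (Set.to_countable s).measurableSet]
  exact ENNReal.tsum_le_tsum fun i => Set.indicator_le_indicator (h i)

lemma exists_rat_le_sub_mul_le {m e τ : ℝ≥0∞} (hm : m ≠ ∞) (hme : m * e ≠ ∞) (hτ : τ ≠ 0) :
    ∃ r : ℚ, ENNReal.ofReal r ≤ m ∧ m * e ≤ ENNReal.ofReal r * e + τ := by
  rcases eq_or_ne (m * e) 0 with h₀ | h₀
  · exact ⟨0, by simp, by simp [h₀]⟩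
  obtain ⟨hm₀, he₀⟩ := mul_ne_zero_iff.1 h₀
  have he : e ≠ ∞ := fun h => hme (by rw [h, ENNReal.mul_top hm₀])
  have hlt : m - τ / e < m := ENNReal.sub_lt_self hm hm₀ (ENNReal.div_pos hτ he).ne'
  obtain ⟨r, -, hr, hrm⟩ := ENNReal.lt_iff_exists_rat_btwn.1 hlt
  refine ⟨r, hrm.le, ?_⟩
  calc m * e ≤ (ENNReal.ofReal r + τ / e) * e := by gcongr; exact tsub_le_iff_right.1 hr.le
    _ = ENNReal.ofReal r * e + τ := by rw [add_mul, ENNReal.div_mul_cancel he₀ he]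

lemma exists_ratMeasure_le_lintegral_le_add (π : Measure ι) [IsFiniteMeasure π] {f : ι → ℝ≥0∞}
    (hf : ∫⁻ i, f i ∂π ≠ ∞) {ε : ℝ≥0∞} (hε : ε ≠ 0) :
    ∃ q : ι →₀ ℚ, ratMeasure q ≤ π ∧ ∫⁻ i, f i ∂π ≤ ∫⁻ i, f i ∂(ratMeasure q) + ε := by
  classical
  have hfsum : ∑' i, π {i} * f i ≠ ∞ := by
    simpa only [lintegral_countable', mul_comm] using hf
  have hε2 : ε / 2 ≠ 0 := (ENNReal.half_pos hε).ne'
  obtain ⟨τ, hτ, hτε⟩ := ENNReal.exists_pos_sum_of_countable' hε2 ι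
  choose r hrπ hrτ using fun i => exists_rat_le_sub_mul_le (measure_ne_top π {i})
    (ENNReal.ne_top_of_tsum_ne_top hfsum i) (hτ i).ne'
  obtain ⟨F, hF⟩ := ((tendsto_order.1 (ENNReal.tendsto_tsum_compl_atTop_zero hfsum)).2 _
    (pos_iff_ne_zero.2 hε2)).exists
  let q : ι →₀ ℚ := Finsupp.onFinset F (fun i => if i ∈ F then r i else 0) (by aesop)
  refine ⟨q, le_iff_forall_singleton_le.2 fun i => ?_, ?_⟩
  · by_cases hi : i ∈ F <;> simp [ratMeasure_singleton, q, hi, hrπ]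
  calc ∫⁻ i, f i ∂π = ∑' i, π {i} * f i := by simp only [lintegral_countable', mul_comm]
    _ ≤ ∑' i, (ENNReal.ofReal (q i) * f i + τ i
          + Set.indicator {i | i ∉ F} (fun i => π {i} * f i) i) := by
        refine ENNReal.tsum_le_tsum fun i => ?_
        by_cases hi : i ∈ F
        · simpa [q, hi] using hrτ i
        · simp [hi]
    _ = ∫⁻ i, f i ∂(ratMeasure q) + (∑' i, τ i + ∑' i : {i // i ∉ F}, π {i.1} * f i) := by
        rw [ENNReal.tsum_add, ENNReal.tsum_add, lintegral_ratMeasure, add_assoc,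
          ← tsum_subtype {i | i ∉ F}]
        rfl
    _ ≤ ∫⁻ i, f i ∂(ratMeasure q) + ε := by
        rw [← ENNReal.add_halves ε]
        gcongr

end RationalMeasure

section CountableSpace

variable {ι : Type*} [Countable ι] [MeasurableSpace ι] [MeasurableSingletonClass ι]
  {D : ι × ι → ℝ≥0∞} {E : ι → ℝ≥0∞}

/-- The cost of the completion of the partial coupling `ratMeasure q` of `m.1` and `m.2`, for a
transport cost `D` dominated by `E ⊕ E`; it is `∞` if `ratMeasure q` is not a partial coupling. -/
def partialCost (D : ι × ι → ℝ≥0∞) (E : ι → ℝ≥0∞) (q : ι × ι →₀ ℚ)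
    (m : Measure ι × Measure ι) : ℝ≥0∞ :=
  open Classical in
  if (ratMeasure q).map Prod.fst ≤ m.1 ∧ (ratMeasure q).map Prod.snd ≤ m.2 then
    ∫⁻ z, D z ∂(ratMeasure q)
      + (∫⁻ i, E i ∂m.1 - ∫⁻ i, E i ∂((ratMeasure q).map Prod.fst))
      + (∫⁻ i, E i ∂m.2 - ∫⁻ i, E i ∂((ratMeasure q).map Prod.snd))
  else ∞

lemma measurableSet_setOf_measure_le (σ : Measure ι) : MeasurableSet {μ : Measure ι | σ ≤ μ} := by
  simp only [le_iff_forall_singleton_le, Set.ofPred_forall]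
  exact .iInter fun i =>
    measurableSet_le measurable_const (Measure.measurable_coe (measurableSet_singleton i))

lemma measurable_partialCost (D : ι × ι → ℝ≥0∞) (E : ι → ℝ≥0∞) (q : ι × ι →₀ ℚ) :
    Measurable (partialCost D E q) := by
  classical
  have : Measurable fun μ : Measure ι => ∫⁻ i, E i ∂μ :=
    Measure.measurable_lintegral (measurable_of_countable E)
  refine Measurable.ite (.inter ?_ ?_) (by fun_prop) measurable_const
  · exact measurable_fst (measurableSet_setOf_measure_le _)
  · exact measurable_snd (measurableSet_setOf_measure_le _)

lemma iInf_Cpl_le_partialCost (hD : ∀ i j, D (i, j) ≤ E i + E j) {μ ν : Measure ι}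
    [IsProbabilityMeasure μ] [IsProbabilityMeasure ν] (hμ : ∫⁻ i, E i ∂μ ≠ ∞)
    (hν : ∫⁻ i, E i ∂ν ≠ ∞) (q : ι × ι →₀ ℚ) :
    ⨅ π ∈ Cpl μ ν, ∫⁻ z, D z ∂π ≤ partialCost D E q (μ, ν) := by
  unfold partialCost
  split_ifs with h
  · obtain ⟨π, hπ, hle⟩ := exists_mem_Cpl_lintegral_le_of_marginals_le h.1 h.2
      (measurable_of_countable E) (measurable_of_countable E) hD hμ hν
    exact (iInf₂_le π hπ).trans hle
  · exact le_top

lemma exists_partialCost_le_add {μ ν : Measure ι} [IsProbabilityMeasure μ]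
    (hμ : ∫⁻ i, E i ∂μ ≠ ∞) (hν : ∫⁻ i, E i ∂ν ≠ ∞)
    {π : Measure (ι × ι)} (hπ : π ∈ Cpl μ ν) {ε : ℝ≥0∞} (hε : ε ≠ 0) :
    ∃ q, partialCost D E q (μ, ν) ≤ ∫⁻ z, D z ∂π + (ε + ε) := by
  have : IsProbabilityMeasure π := isProbabilityMeasure_of_mem_Cpl hπ
  have hE : Measurable E := measurable_of_countable E
  have hsum : ∫⁻ z, (E z.1 + E z.2) ∂π = ∫⁻ i, E i ∂μ + ∫⁻ i, E i ∂ν :=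
    lintegral_add_of_mem_Cpl hπ hE hE
  obtain ⟨q, hqπ, hq⟩ := exists_ratMeasure_le_lintegral_le_add π
    (f := fun z => E z.1 + E z.2) (hsum ▸ ENNReal.add_ne_top.2 ⟨hμ, hν⟩) hε
  have hfst : (ratMeasure q).map Prod.fst ≤ μ := hπ.1 ▸ Measure.map_mono hqπ measurable_fst
  have hsnd : (ratMeasure q).map Prod.snd ≤ ν := hπ.2 ▸ Measure.map_mono hqπ measurable_snd
  rw [hsum, lintegral_add_of_mem_Cpl ⟨rfl, rfl⟩ hE hE] at hq
  have residual_le {a b a' b' : ℝ≥0∞} (h : a + b ≤ a' + b' + ε) (hb : b' ≤ b) (hb' : b ≠ ∞) :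
      a - a' ≤ ε := by
    rw [tsub_le_iff_left]
    refine (ENNReal.add_le_add_iff_right hb').1 (h.trans ?_)
    rw [add_right_comm]
    gcongr
  refine ⟨q, ?_⟩
  rw [partialCost, if_pos ⟨hfst, hsnd⟩, add_assoc]
  gcongr
  · exact residual_le hq (lintegral_mono' hsnd le_rfl) hν
  · exact residual_le ((add_comm _ _).trans_le (hq.trans_eq (by rw [add_comm (lintegral _ E)])))
      (lintegral_mono' hfst le_rfl) hμ

lemma iInf_partialCost (hD : ∀ i j, D (i, j) ≤ E i + E j) {μ ν : Measure ι}
    [IsProbabilityMeasure μ] [IsProbabilityMeasure ν] (hμ : ∫⁻ i, E i ∂μ ≠ ∞)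
    (hν : ∫⁻ i, E i ∂ν ≠ ∞) :
    ⨅ q, partialCost D E q (μ, ν) = ⨅ π ∈ Cpl μ ν, ∫⁻ z, D z ∂π := by
  refine le_antisymm (le_iInf₂ fun π hπ => ?_) (le_iInf (iInf_Cpl_le_partialCost hD hμ hν))
  refine ENNReal.le_of_forall_pos_le_add fun ε hε _ => ?_
  obtain ⟨q, hq⟩ := exists_partialCost_le_add (D := D) hμ hν hπ (ε := ε / 2)
    (ENNReal.half_pos (by exact_mod_cast hε.ne')).ne'
  exact (iInf_le _ q).trans (by simpa only [ENNReal.add_halves] using hq)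

lemma Wp_eq_iInf_rpow {γ : Type*} [MeasurableSpace γ] {p : ℝ} (hp : 1 ≤ p) (d : γ → γ → ℝ≥0∞)
    (μ ν : Measure γ) :
    Wp p d μ ν = (⨅ π ∈ Cpl μ ν, ∫⁻ z, d z.1 z.2 ^ p ∂π) ^ (1 / p) := by
  simp only [← ENNReal.orderIsoRpow_apply (1 / p) (by positivity), OrderIso.map_iInf₂]
  rfl

lemma aemeasurable_Wp_of_countable {Ω : Type*} [MeasurableSpace Ω] {m : Measure Ω}
    {κ κ' : Ω → Measure ι} (hκ : Measurable κ) (hκ' : Measurable κ') {p : ℝ} (hp : 1 ≤ p)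
    {d : ι → ι → ℝ≥0∞} (hd : ∀ i j, d i j ^ p ≤ E i + E j)
    (hκE : ∀ᵐ ω ∂m, IsProbabilityMeasure (κ ω) ∧ ∫⁻ i, E i ∂(κ ω) ≠ ∞)
    (hκE' : ∀ᵐ ω ∂m, IsProbabilityMeasure (κ' ω) ∧ ∫⁻ i, E i ∂(κ' ω) ≠ ∞) :
    AEMeasurable (fun ω => Wp p d (κ ω) (κ' ω)) m := by
  let D : ι × ι → ℝ≥0∞ := fun z => d z.1 z.2 ^ p
  refine ⟨fun ω => (⨅ q, partialCost D E q (κ ω, κ' ω)) ^ (1 / p), ?_, ?_⟩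
  · exact (Measurable.iInf fun q =>
      (measurable_partialCost D E q).comp (hκ.prodMk hκ')).pow_const _
  · filter_upwards [hκE, hκE'] with ω ⟨_, hω⟩ ⟨_, hω'⟩
    rw [Wp_eq_iInf_rpow hp, iInf_partialCost hd hω hω']

end CountableSpace

section MeasurabilityOfWasserstein

lemma edist_rpow_le_mul_add {B : Type*} [PseudoEMetricSpace B] {p : ℝ} (hp : 1 ≤ p) (x y z : B) :
    edist y z ^ p ≤ 2 ^ (p - 1) * edist x y ^ p + 2 ^ (p - 1) * edist x z ^ p := by
  rw [← mul_add]
  refine le_trans ?_ (ENNReal.rpow_add_le_mul_rpow_add_rpow _ _ hp)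
  gcongr
  exact edist_triangle_left _ _ _

variable {Ω B : Type*} [MeasurableSpace Ω] [PseudoMetricSpace B] [MeasurableSpace B] {p : ℝ}

lemma MemPp.lowerLpNorm_edist_comp_ne_top (hp : 1 ≤ p) {μ : Measure B} (hμ : MemPp p edist μ)
    {T : B → B} {η : ℝ≥0∞} (hη : η ≠ ∞) (hT : ∀ x, edist x (T x) ≤ η) (b₀ : B) :
    lowerLpNorm p (fun x => edist b₀ (T x)) μ ≠ ∞ := by
  obtain ⟨_, x₀, hx₀⟩ := hμ
  have hle : ∀ x, edist b₀ (T x) ≤ edist x₀ x + (edist b₀ x₀ + η) := fun x =>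
    calc edist b₀ (T x) ≤ edist b₀ x₀ + edist x₀ x + edist x (T x) := edist_triangle4 _ _ _ _
      _ ≤ edist b₀ x₀ + edist x₀ x + η := by gcongr; exact hT x
      _ = edist x₀ x + (edist b₀ x₀ + η) := by ring
  refine ne_top_of_le_ne_top ?_ ((lowerLpNorm_mono hp hle).trans
    (lowerLpNorm_add_le hp _ aemeasurable_const))
  rw [lowerLpNorm_const hp]
  exact ENNReal.add_ne_top.2 ⟨ENNReal.rpow_ne_top_of_nonneg (by positivity) hx₀,
    ENNReal.add_ne_top.2 ⟨edist_ne_top _ _, hη⟩⟩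

lemma Wp_map_le_Wp_add (hp : 1 ≤ p) {b : ℕ → B} {c : B → ℕ} (hc : Measurable c) {η : ℝ≥0∞}
    (hbc : ∀ x, edist x (b (c x)) ≤ η) (μ ν : Measure B) [IsProbabilityMeasure μ] :
    Wp p (fun i j => edist (b i) (b j)) (μ.map c) (ν.map c) ≤ Wp p edist μ ν + (η + η) :=
  Wp_map_map_le hp hc fun x y =>
    calc edist (b (c x)) (b (c y))
        ≤ edist (b (c x)) x + edist x y + edist y (b (c y)) := edist_triangle4 _ _ _ _
      _ ≤ η + edist x y + η := by
        gcongr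
        · exact edist_comm x _ ▸ hbc x
        · exact hbc y
      _ = edist x y + (η + η) := by ring

lemma aemeasurable_Wp_map (hp : 1 ≤ p) {b : ℕ → B} {c : B → ℕ} (hc : Measurable c) {η : ℝ≥0∞}
    (hη : η ≠ ∞) (hbc : ∀ x, edist x (b (c x)) ≤ η) {m : Measure Ω} {κ κ' : Ω → Measure B}
    (hκ : Measurable κ) (hκ' : Measurable κ') (hmem : ∀ᵐ ω ∂m, MemPp p edist (κ ω))
    (hmem' : ∀ᵐ ω ∂m, MemPp p edist (κ' ω)) :
    AEMeasurable (fun ω => Wp p (fun i j => edist (b i) (b j)) ((κ ω).map c) ((κ' ω).map c)) m := by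
  have hfin {μ : Measure B} (hμ : MemPp p edist μ) : IsProbabilityMeasure (μ.map c)
      ∧ ∫⁻ j, 2 ^ (p - 1) * edist (b 0) (b j) ^ p ∂(μ.map c) ≠ ∞ := by
    have := hμ.1
    refine ⟨Measure.isProbabilityMeasure_map hc.aemeasurable, ?_⟩
    have h := hμ.lowerLpNorm_edist_comp_ne_top hp hη hbc (b 0)
    rw [lintegral_map (measurable_of_countable _) hc, lintegral_const_mul' _ _
      (ENNReal.rpow_ne_top_of_nonneg (by linarith) (by norm_num)), ← lowerLpNorm_rpow hp]
    exact ENNReal.mul_ne_top (ENNReal.rpow_ne_top_of_nonneg (by linarith) (by norm_num))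
      (ENNReal.rpow_ne_top_of_nonneg (by positivity) h)
  exact aemeasurable_Wp_of_countable ((Measure.measurable_map c hc).comp hκ)
    ((Measure.measurable_map c hc).comp hκ') hp (fun i j => edist_rpow_le_mul_add hp (b 0) _ _)
    (hmem.mono fun _ => hfin) (hmem'.mono fun _ => hfin)

variable [OpensMeasurableSpace B]

lemma exists_measurable_nat_edist_le [SecondCountableTopology B] [Nonempty B] {η : ℝ≥0∞}
    (hη : η ≠ 0) : ∃ (b : ℕ → B) (c : B → ℕ), Measurable c ∧ ∀ x, edist x (b (c x)) ≤ η := by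
  classical
  have hex : ∀ x : B, ∃ n, edist x (TopologicalSpace.denseSeq B n) < η := fun x => by
    obtain ⟨n, hn⟩ := (TopologicalSpace.denseRange_denseSeq B).exists_mem_open
      (Metric.isOpen_eball (x := x) (ε := η)) ⟨x, Metric.mem_eball_self (pos_iff_ne_zero.2 hη)⟩
    exact ⟨n, edist_comm x _ ▸ hn⟩
  exact ⟨_, fun x => Nat.find (hex x), measurable_find hex fun k =>
    measurableSet_lt (measurable_id.edist measurable_const) measurable_const,
    fun x => (Nat.find_spec (hex x)).le⟩

lemma Wp_le_Wp_map_add [SecondCountableTopology B] [StandardBorelSpace B] [Nonempty B]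
    (hp : 1 ≤ p) {b : ℕ → B} {c : B → ℕ} (hc : Measurable c)
    {η : ℝ≥0∞} (hbc : ∀ x, edist x (b (c x)) ≤ η) (μ ν : Measure B) [IsProbabilityMeasure μ]
    [IsProbabilityMeasure ν] :
    Wp p edist μ ν ≤ Wp p (fun i j => edist (b i) (b j)) (μ.map c) (ν.map c) + (η + η) := by
  have hT : Measurable fun x => b (c x) := (measurable_of_countable b).comp hc
  have hmap (ρ : Measure B) : ρ.map (fun x => b (c x)) = (ρ.map c).map b :=
    (Measure.map_map (measurable_of_countable b) hc).symm
  have : IsProbabilityMeasure (μ.map c) := Measure.isProbabilityMeasure_map hc.aemeasurable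
  have : IsProbabilityMeasure (μ.map fun x => b (c x)) :=
    Measure.isProbabilityMeasure_map hT.aemeasurable
  have : IsProbabilityMeasure (ν.map fun x => b (c x)) :=
    Measure.isProbabilityMeasure_map hT.aemeasurable
  have triangle (ρ₁ ρ₂ ρ₃ : Measure B) [IsProbabilityMeasure ρ₂] :
      Wp p edist ρ₁ ρ₃ ≤ Wp p edist ρ₁ ρ₂ + Wp p edist ρ₂ ρ₃ :=
    Wp_triangle hp measurable_edist edist_triangle ρ₁ ρ₂ ρ₃
  have hμ : Wp p edist μ (μ.map fun x => b (c x)) ≤ η := by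
    simpa only [Measure.map_id] using Wp_map_map_le_of_forall_le hp measurable_id hT hbc μ
  have hν : Wp p edist (ν.map fun x => b (c x)) ν ≤ η := by
    simpa only [Measure.map_id] using Wp_map_map_le_of_forall_le hp hT measurable_id
      (fun x => edist_comm x _ ▸ hbc x) ν
  have hmid : Wp p edist (μ.map fun x => b (c x)) (ν.map fun x => b (c x))
      ≤ Wp p (fun i j => edist (b i) (b j)) (μ.map c) (ν.map c) := by
    simpa only [hmap, add_zero] using Wp_map_map_le (μ := μ.map c) (ν := ν.map c) hp
      (measurable_of_countable b) (r := 0) fun i j => (add_zero (edist (b i) (b j))).ge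
  calc Wp p edist μ ν
      ≤ Wp p edist μ (μ.map fun x => b (c x)) + (Wp p edist (μ.map fun x => b (c x))
          (ν.map fun x => b (c x)) + Wp p edist (ν.map fun x => b (c x)) ν) :=
        (triangle _ _ _).trans (add_le_add_right (triangle _ _ _) _)
    _ ≤ η + (Wp p (fun i j => edist (b i) (b j)) (μ.map c) (ν.map c) + η) := by gcongr
    _ = Wp p (fun i j => edist (b i) (b j)) (μ.map c) (ν.map c) + (η + η) := by ring

lemma aemeasurable_Wp_edist [SecondCountableTopology B] [StandardBorelSpace B] [Nonempty B]
    (hp : 1 ≤ p) {m : Measure Ω} {κ κ' : Ω → Measure B} (hκ : Measurable κ) (hκ' : Measurable κ')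
    (hmem : ∀ᵐ ω ∂m, MemPp p edist (κ ω)) (hmem' : ∀ᵐ ω ∂m, MemPp p edist (κ' ω)) :
    AEMeasurable (fun ω => Wp p edist (κ ω) (κ' ω)) m := by
  obtain ⟨η, -, hη, hη_lim⟩ := exists_seq_strictAnti_tendsto' (zero_lt_one' ℝ≥0∞)
  choose b c hc hbc using fun n => exists_measurable_nat_edist_le (B := B) (hη n).1.ne'
  let F : ℕ → Ω → ℝ≥0∞ := fun n ω =>
    Wp p (fun i j => edist (b n i) (b n j)) ((κ ω).map (c n)) ((κ' ω).map (c n)) + (η n + η n)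
  have hF : ∀ n, AEMeasurable (F n) m := fun n =>
    (aemeasurable_Wp_map hp (hc n) ((hη n).2.trans_le le_top).ne (hbc n)
      hκ hκ' hmem hmem').add_const _
  refine aemeasurable_of_tendsto_metrizable_ae atTop hF ?_
  filter_upwards [hmem, hmem'] with ω ⟨_, _⟩ ⟨_, _⟩
  have hlim : Tendsto (fun n => Wp p edist (κ ω) (κ' ω) + (η n + η n) + (η n + η n)) atTop
      (𝓝 (Wp p edist (κ ω) (κ' ω))) := by
    simpa using (tendsto_const_nhds.add (hη_lim.add hη_lim)).add (hη_lim.add hη_lim)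
  exact tendsto_of_tendsto_of_tendsto_of_le_of_le tendsto_const_nhds hlim
    (fun n => Wp_le_Wp_map_add hp (hc n) (hbc n) _ _)
    (fun n => add_le_add_left (Wp_map_le_Wp_add hp (hc n) (hbc n) _ _) _)

end MeasurabilityOfWasserstein

section LipschitzApproximation

variable {Z E : Type*} [NormedAddCommGroup E]

lemma lowerLpNorm_edist_eq_eLpNorm_sub {p : ℝ} (hp : 1 ≤ p) [MeasurableSpace α]
    (F g : α → E) (μ : Measure α) :
    lowerLpNorm p (fun x => edist (F x) (g x)) μ = eLpNorm (F - g) (ENNReal.ofReal p) μ := by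
  have hp0 : 0 < p := by positivity
  rw [eLpNorm_eq_lintegral_rpow_enorm_toReal (by simpa using hp0) ENNReal.ofReal_ne_top,
    ENNReal.toReal_ofReal hp0.le]
  simp only [lowerLpNorm, edist_eq_enorm_sub, Pi.sub_apply]

variable [PseudoEMetricSpace Z] [NormedSpace ℝ E]

lemma lipschitzWith_thickenedIndicator_smul {δ : ℝ} (hδ : 0 < δ) (F : Set Z) (c : E) :
    LipschitzWith (δ.toNNReal⁻¹ * ‖c‖₊) fun z => (thickenedIndicator hδ F z : ℝ) • c := by
  intro x y
  calc edist ((thickenedIndicator hδ F x : ℝ) • c) ((thickenedIndicator hδ F y : ℝ) • c)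
      = edist (thickenedIndicator hδ F x) (thickenedIndicator hδ F y) * ‖c‖₊ := by
        rw [edist_eq_enorm_sub, ← sub_smul, enorm_smul, ← edist_eq_enorm_sub]
        rfl
    _ ≤ δ.toNNReal⁻¹ * edist x y * ‖c‖₊ := by
        gcongr
        exact lipschitzWith_thickenedIndicator hδ F x y
    _ = _ := by
        push_cast
        ring

lemma norm_thickenedIndicator_smul_sub_indicator_le {δ : ℝ} (hδ : 0 < δ) {F s : Set Z}
    (hFs : F ⊆ s) (c : E) (z : Z) :
    ‖(thickenedIndicator hδ F z : ℝ) • c - s.indicator (fun _ => c) z‖ ≤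
      ‖(Metric.thickening δ F \ F ∪ s \ F).indicator (fun _ => c) z‖ := by
  by_cases hzF : z ∈ F
  · simp [thickenedIndicator_one hδ F hzF, hFs hzF]
  by_cases hz : z ∈ Metric.thickening δ F ∪ s
  · rw [← Set.union_sdiff_distrib, Set.indicator_of_mem (show z ∈ _ \ F from ⟨hz, hzF⟩)]
    have h_nonneg : (0 : ℝ) ≤ thickenedIndicator hδ F z := NNReal.coe_nonneg _
    have h_le_one : (thickenedIndicator hδ F z : ℝ) ≤ 1 := thickenedIndicator_le_one hδ F z
    by_cases hzs : z ∈ s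
    · rw [Set.indicator_of_mem hzs]
      nth_rw 2 [← one_smul ℝ c]
      rw [← sub_smul, norm_smul, Real.norm_eq_abs]
      exact mul_le_of_le_one_left (norm_nonneg c)
        (abs_le.2 ⟨by linarith [h_nonneg], by linarith [h_le_one]⟩)
    · rw [Set.indicator_of_notMem hzs, sub_zero, norm_smul, Real.norm_eq_abs]
      exact mul_le_of_le_one_left (norm_nonneg c) (abs_le.2 ⟨by linarith [h_nonneg], h_le_one⟩)
  · rw [Set.mem_union, not_or] at hz
    simp [thickenedIndicator_zero hδ F hz.1, hz.2]

variable [MeasurableSpace Z] [BorelSpace Z]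

/-- The approximation is a thickened indicator of a closed subset of `s` of almost full measure. -/
lemma exists_lipschitzWith_eLpNorm_sub_indicator_le (m : Measure Z) [IsFiniteMeasure m]
    {q : ℝ≥0∞} (hq : q ≠ ∞) (c : E) {s : Set Z} (hs : MeasurableSet s) {ε : ℝ≥0∞} (hε : ε ≠ 0) :
    ∃ g : Z → E, eLpNorm (g - s.indicator fun _ => c) q m ≤ ε ∧ ∃ C, LipschitzWith C g := by
  obtain ⟨η, hη₀, hη⟩ := exists_eLpNorm_indicator_le (μ := m) hq c hε
  have hη₀' : (η / 2 : ℝ≥0∞) ≠ 0 := by simpa using hη₀.ne'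
  obtain ⟨F, hFs, hF, hsF⟩ := hs.exists_isClosed_sdiff_lt (measure_ne_top m s) hη₀'
  have hthick : ∀ᶠ δ in 𝓝[>] (0 : ℝ), m (Metric.thickening δ F) < m F + η / 2 :=
    (tendsto_measure_thickening_of_isClosed ⟨1, one_pos, measure_ne_top m _⟩ hF).eventually_lt_const
      (ENNReal.lt_add_right (measure_ne_top m F) hη₀')
  obtain ⟨δ, hδF, hδ⟩ := (hthick.and self_mem_nhdsWithin).exists
  have hsmall : m (Metric.thickening δ F \ F ∪ s \ F) ≤ η := by
    calc m (Metric.thickening δ F \ F ∪ s \ F)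
        ≤ m (Metric.thickening δ F \ F) + m (s \ F) := measure_union_le _ _
      _ ≤ η / 2 + η / 2 := by
          gcongr
          rw [measure_sdiff (Metric.self_subset_thickening hδ F) hF.nullMeasurableSet
            (measure_ne_top m F), tsub_le_iff_left]
          exact hδF.le
      _ = η := ENNReal.add_halves _
  exact ⟨fun z => (thickenedIndicator hδ F z : ℝ) • c,
    (eLpNorm_mono (norm_thickenedIndicator_smul_sub_indicator_le hδ hFs c)).trans (hη _ hsmall),
    _, lipschitzWith_thickenedIndicator_smul hδ F c⟩

lemma exists_lipschitzWith_eLpNorm_sub_le [SecondCountableTopology Z] {m : Measure Z}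
    [IsFiniteMeasure m] {q : ℝ≥0∞} (hq : q ≠ ∞) {F : Z → E} (hF : MemLp F q m) {ε : ℝ≥0∞}
    (hε : ε ≠ 0) : ∃ g : Z → E, eLpNorm (F - g) q m ≤ ε ∧ ∃ C, LipschitzWith C g :=
  hF.induction_dense hq (fun g => ∃ C, LipschitzWith C g)
    (fun c _ hs _ _ hε => exists_lipschitzWith_eLpNorm_sub_indicator_le m hq c hs hε)
    (fun _ _ ⟨_, hf⟩ ⟨_, hg⟩ => ⟨_, hf.add hg⟩)
    (fun _ ⟨_, hg⟩ => hg.continuous.aestronglyMeasurable) hε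

/-- Maps into the metric space `Y` need not have Lipschitz approximations with values in `Y`, so
`Y` is embedded isometrically into a Banach space. -/
lemma exists_lipschitzWith_lowerLpNorm_edist_kuratowskiEmbedding_le [SecondCountableTopology Z]
    {Y : Type*} [MetricSpace Y] [SecondCountableTopology Y] [MeasurableSpace Y] [BorelSpace Y]
    {p : ℝ} (hp : 1 ≤ p) {m : Measure Z} [IsFiniteMeasure m] {G : Z → Y} (hG : Measurable G)
    {y₀ : Y} (hfin : lowerLpNorm p (fun z => edist (G z) y₀) m ≠ ∞) {ε : ℝ≥0∞} (hε : ε ≠ 0) :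
    ∃ g : Z → lp (fun _ : ℕ => ℝ) ∞, ∃ C, LipschitzWith C g ∧
      lowerLpNorm p (fun z => edist (kuratowskiEmbedding Y (G z)) (g z)) m ≤ ε := by
  have hι := kuratowskiEmbedding.isometry Y
  have hsub : MemLp (fun z => kuratowskiEmbedding Y (G z) - kuratowskiEmbedding Y y₀)
      (ENNReal.ofReal p) m := by
    refine ⟨(hι.continuous.comp_aestronglyMeasurable hG.aestronglyMeasurable).sub
      aestronglyMeasurable_const, ?_⟩
    rw [lt_top_iff_ne_top]
    convert hfin
    rw [← Pi.sub_def, ← lowerLpNorm_edist_eq_eLpNorm_sub hp]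
    simp only [hι.edist_eq]
  have hmem : MemLp (fun z => kuratowskiEmbedding Y (G z)) (ENNReal.ofReal p) m := by
    simpa [Pi.add_def] using hsub.add (memLp_const (kuratowskiEmbedding Y y₀))
  obtain ⟨g, hle, C, hC⟩ := exists_lipschitzWith_eLpNorm_sub_le ENNReal.ofReal_ne_top hmem hε
  exact ⟨g, C, hC, (lowerLpNorm_edist_eq_eLpNorm_sub hp _ _ _).trans_le hle⟩

end LipschitzApproximation

section ProdDist

variable {p : ℝ} {d₁ : α → α → ℝ≥0∞} {d₂ : β → β → ℝ≥0∞}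

lemma prodDist_le_add (hp : 1 ≤ p) (u v : α × β) :
    prodDist p d₁ d₂ u v ≤ d₁ u.1 v.1 + d₂ u.2 v.2 :=
  ENNReal.rpow_add_rpow_le_add _ _ hp

lemma fst_le_prodDist (hp : 1 ≤ p) (u v : α × β) : d₁ u.1 v.1 ≤ prodDist p d₁ d₂ u v := by
  rw [← rpow_rpow_one_div hp (d₁ u.1 v.1), prodDist]
  gcongr
  exact le_self_add

lemma snd_le_prodDist (hp : 1 ≤ p) (u v : α × β) : d₂ u.2 v.2 ≤ prodDist p d₁ d₂ u v := by
  rw [← rpow_rpow_one_div hp (d₂ u.2 v.2), prodDist]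
  gcongr
  exact le_add_self

lemma edist_le_prodDist {A B : Type*} [PseudoEMetricSpace A] [PseudoEMetricSpace B] (hp : 1 ≤ p)
    (u v : A × B) : edist u v ≤ prodDist p edist edist u v :=
  max_le (fst_le_prodDist hp u v) (snd_le_prodDist hp u v)

lemma prodDist_self (hp : 1 ≤ p) {u : α × β} (h₁ : d₁ u.1 u.1 = 0) (h₂ : d₂ u.2 u.2 = 0) :
    prodDist p d₁ d₂ u u = 0 :=
  nonpos_iff_eq_zero.1 <| (prodDist_le_add hp u u).trans_eq (by rw [h₁, h₂, add_zero])

lemma prodDist_triangle (hp : 1 ≤ p) {u v w : α × β} (h₁ : d₁ u.1 w.1 ≤ d₁ u.1 v.1 + d₁ v.1 w.1)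
    (h₂ : d₂ u.2 w.2 ≤ d₂ u.2 v.2 + d₂ v.2 w.2) :
    prodDist p d₁ d₂ u w ≤ prodDist p d₁ d₂ u v + prodDist p d₁ d₂ v w := by
  have hMinkowski := ENNReal.Lp_add_le Finset.univ ![d₁ u.1 v.1, d₂ u.2 v.2]
    ![d₁ v.1 w.1, d₂ v.2 w.2] hp
  simp only [Fin.sum_univ_two, Matrix.cons_val_zero, Matrix.cons_val_one] at hMinkowski
  refine le_trans ?_ hMinkowski
  rw [prodDist]
  gcongr

lemma measurable_prodDist [MeasurableSpace α] [MeasurableSpace β]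
    (h₁ : Measurable fun z : α × α => d₁ z.1 z.2) (h₂ : Measurable fun z : β × β => d₂ z.1 z.2) :
    Measurable fun z : (α × β) × α × β => prodDist p d₁ d₂ z.1 z.2 :=
  (((h₁.comp (by fun_prop : Measurable fun z : (α × β) × α × β => (z.1.1, z.2.1))).pow_const p).add
    ((h₂.comp (by fun_prop : Measurable fun z : (α × β) × α × β => (z.1.2, z.2.2))).pow_const p)
      ).pow_const _

end ProdDist

section GraphMeasure

variable [MeasurableSpace α] [MeasurableSpace β]

/-- The image of `μ` on the graph of `f`; these are the elements of `FP(α, β)`. -/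
def graphMeasure (μ : Measure α) (f : α → β) : Measure (α × β) :=
  μ.map fun x => (x, f x)

lemma map_fst_graphMeasure (μ : Measure α) {f : α → β} (hf : Measurable f) :
    (graphMeasure μ f).map Prod.fst = μ :=
  (Measure.fst_map_prodMk hf).trans Measure.map_id'

lemma eq_graphMeasure_of_ae {u : Measure (α × β)} {f : α → β} (hf : Measurable f)
    (h : ∀ᵐ z ∂u, z.2 = f z.1) : u = graphMeasure (u.map Prod.fst) f := by
  rw [graphMeasure, Measure.map_map (by fun_prop) (by fun_prop)]
  conv_lhs => rw [← Measure.map_id (μ := u)]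
  exact Measure.map_congr (h.mono fun z hz => Prod.ext rfl hz)

lemma lowerLpNorm_graphMeasure {p : ℝ} (μ : Measure α) {f : α → β} (hf : Measurable f)
    {φ : α × β → ℝ≥0∞} (hφ : Measurable φ) :
    lowerLpNorm p φ (graphMeasure μ f) = lowerLpNorm p (fun x => φ (x, f x)) μ :=
  lowerLpNorm_map hφ (measurable_id.prodMk hf)

end GraphMeasure

section GraphDefect

variable {Z A B Y : Type*} {p : ℝ}

/-- `φ` measures how far a point `(z, y)` is from the graph of a virtual `C`-Lipschitz map on `Z`,
which may take its values in a space larger than `Y`. -/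
structure IsGraphDefect [PseudoEMetricSpace Z] [MeasurableSpace Z] [PseudoEMetricSpace Y]
    [MeasurableSpace Y] (C : ℝ≥0∞) (φ : Z × Y → ℝ≥0∞) : Prop where
  measurable : Measurable φ
  edist_le : ∀ v w, edist v.2 w.2 ≤ φ v + φ w + C * edist v.1 w.1
  le_add : ∀ v w, φ w ≤ φ v + C * edist v.1 w.1 + edist v.2 w.2

lemma IsGraphDefect.of_lipschitzWith {E : Type*} [PseudoEMetricSpace Z] [MeasurableSpace Z]
    [OpensMeasurableSpace Z] [PseudoEMetricSpace Y] [MeasurableSpace Y] [OpensMeasurableSpace Y]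
    [SecondCountableTopology Y] [PseudoEMetricSpace E] {ι : Y → E} (hι : Isometry ι)
    {g : Z → E} {C : NNReal} (hg : LipschitzWith C g) :
    IsGraphDefect C fun v : Z × Y => edist (ι v.2) (g v.1) where
  measurable :=
    ((hι.continuous.comp continuous_snd).edist (hg.continuous.comp continuous_fst)).measurable
  edist_le v w :=
    calc edist v.2 w.2 = edist (ι v.2) (ι w.2) := (hι.edist_eq _ _).symm
      _ ≤ edist (ι v.2) (g v.1) + edist (g v.1) (g w.1) + edist (g w.1) (ι w.2) :=
        edist_triangle4 _ _ _ _
      _ ≤ edist (ι v.2) (g v.1) + C * edist v.1 w.1 + edist (ι w.2) (g w.1) := by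
        rw [edist_comm (g w.1)]
        gcongr
        exact hg _ _
      _ = _ := by ring
  le_add v w :=
    calc edist (ι w.2) (g w.1)
        ≤ edist (ι w.2) (ι v.2) + edist (ι v.2) (g v.1) + edist (g v.1) (g w.1) :=
        edist_triangle4 _ _ _ _
      _ ≤ edist v.2 w.2 + edist (ι v.2) (g v.1) + C * edist v.1 w.1 := by
        rw [hι.edist_eq, edist_comm w.2]
        gcongr
        exact hg _ _
      _ = _ := by ring

lemma exists_isGraphDefect_lowerLpNorm_le [PseudoEMetricSpace Z] [MeasurableSpace Z] [BorelSpace Z]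
    [SecondCountableTopology Z] [MetricSpace Y] [MeasurableSpace Y] [BorelSpace Y]
    [SecondCountableTopology Y] (hp : 1 ≤ p) {m : Measure Z} [IsFiniteMeasure m] {G : Z → Y}
    (hG : Measurable G) {y₀ : Y} (hfin : lowerLpNorm p (fun z => edist (G z) y₀) m ≠ ∞)
    {ε : ℝ≥0∞} (hε : ε ≠ 0) :
    ∃ C ≠ ∞, ∃ φ, IsGraphDefect C φ ∧ lowerLpNorm p φ (graphMeasure m G) ≤ ε := by
  obtain ⟨g, C, hg, hle⟩ :=
    exists_lipschitzWith_lowerLpNorm_edist_kuratowskiEmbedding_le hp hG hfin hε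
  exact ⟨C, ENNReal.coe_ne_top, _,
    IsGraphDefect.of_lipschitzWith (kuratowskiEmbedding.isometry Y) hg,
    (lowerLpNorm_map_le hp _ _).trans hle⟩

namespace IsGraphDefect

variable [PseudoEMetricSpace Y] [MeasurableSpace Y] {C : ℝ≥0∞}

lemma lowerLpNorm_le_add_Wp [PseudoEMetricSpace Z] [MeasurableSpace Z] {φ : Z × Y → ℝ≥0∞}
    (hφ : IsGraphDefect C φ) (hC : C ≠ ∞) (hp : 1 ≤ p) {d : Z → Z → ℝ≥0∞}
    (hd : ∀ z z', edist z z' ≤ d z z') (μ ν : Measure (Z × Y)) :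
    lowerLpNorm p φ ν ≤ lowerLpNorm p φ μ + (1 + C) * Wp p (prodDist p d edist) μ ν := by
  refine lowerLpNorm_le_add_mul_Wp hp hφ.measurable (by simp) (by simpa using hC) fun v w => ?_
  calc φ w ≤ φ v + C * edist v.1 w.1 + edist v.2 w.2 := hφ.le_add v w
    _ ≤ φ v + C * prodDist p d edist v w + prodDist p d edist v w := by
      gcongr
      · exact (hd _ _).trans (fst_le_prodDist hp v w)
      · exact snd_le_prodDist hp v w
    _ = φ v + (1 + C) * prodDist p d edist v w := by ring

variable [PseudoEMetricSpace A] [MeasurableSpace A] [PseudoEMetricSpace B] [MeasurableSpace B]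

/-- Any coupling of `μ` and `ν` is pushed to a coupling of the two graph measures. -/
lemma Wp_graphMeasure_le {φ : (A × B) × Y → ℝ≥0∞} (hφ : IsGraphDefect C φ) (hC : C ≠ ∞)
    (hp : 1 ≤ p) {F G : A × B → Y} (hF : Measurable F) (hG : Measurable G) (a a' : A)
    (μ ν : Measure B) [IsProbabilityMeasure μ] :
    Wp p (prodDist p edist edist) (graphMeasure μ fun b => F (a, b))
        (graphMeasure ν fun b => G (a', b)) ≤
      (1 + C) * Wp p edist μ ν + lowerLpNorm p (fun b => φ ((a, b), F (a, b))) μ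
        + lowerLpNorm p (fun b => φ ((a', b), G (a', b))) ν + C * edist a a' := by
  have hφm := hφ.measurable
  refine Wp_map_map_le_mul_add hp (by fun_prop) (by fun_prop) (by simp) (by simpa using hC)
    (by fun_prop) (by fun_prop) fun b b' => ?_
  calc prodDist p edist edist (b, F (a, b)) (b', G (a', b'))
      ≤ edist b b' + edist (F (a, b)) (G (a', b')) := prodDist_le_add hp _ _
    _ ≤ edist b b' + (φ ((a, b), F (a, b)) + φ ((a', b'), G (a', b'))
          + C * (edist a a' + edist b b')) := by
        gcongr
        refine (hφ.edist_le ((a, b), F (a, b)) ((a', b'), G (a', b'))).trans ?_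
        gcongr
        exact max_le le_self_add le_add_self
    _ = _ := by ring

end IsGraphDefect

end GraphDefect

section KernelGraph

variable {A B Y : Type*} [MeasurableSpace A] [MeasurableSpace B] [MeasurableSpace Y]

lemma measurableSet_isFiniteMeasure_and_eq [MeasurableSpace.CountablyGenerated B]
    {f g : A → Measure B} (hf : Measurable f) (hg : Measurable g) :
    MeasurableSet {a | IsFiniteMeasure (f a) ∧ f a = g a} := by
  let S : Set (Set B) := generateSetAlgebra (MeasurableSpace.countableGeneratingSet B)
  have hS : IsSetAlgebra S := isSetAlgebra_generateSetAlgebra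
  have hgen : ‹MeasurableSpace B› = MeasurableSpace.generateFrom S := by
    rw [generateFrom_generateSetAlgebra_eq, MeasurableSpace.generateFrom_countableGeneratingSet]
  have hSm : ∀ s ∈ S, MeasurableSet s := fun s hs =>
    hgen ▸ MeasurableSpace.measurableSet_generateFrom hs
  have heq : {a | IsFiniteMeasure (f a) ∧ f a = g a} =
      {a | f a Set.univ < ∞} ∩ ⋂ s ∈ S, {a | f a s = g a s} := by
    ext a
    simp only [Set.mem_ofPred_eq, Set.mem_inter_iff, Set.mem_iInter, isFiniteMeasure_iff]
    refine and_congr_right fun hfin => ⟨fun h s _ => by rw [h], fun h => ?_⟩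
    have : IsFiniteMeasure (f a) := ⟨hfin⟩
    exact ext_of_generate_finite S hgen hS.isSetRing.isSetSemiring.isPiSystem h
      (h _ hS.univ_mem)
  rw [heq]
  refine (measurableSet_lt ((Measure.measurable_coe .univ).comp hf) measurable_const).inter
    (.biInter (countable_generateSetAlgebra MeasurableSpace.countable_countableGeneratingSet)
      fun s hs => ?_)
  exact measurableSet_eq_fun ((Measure.measurable_coe (hSm s hs)).comp hf)
    ((Measure.measurable_coe (hSm s hs)).comp hg)

lemma ae_graphMeasure_eq_kernel [MeasurableSpace.CountablyGenerated B] (α : Measure A)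
    (κ : Kernel A B) [IsFiniteKernel κ] : ∀ᵐ z ∂graphMeasure α κ, z.2 = κ z.1 := by
  have hm : Measurable fun a => (a, κ a) := by fun_prop
  suffices ∀ᵐ z ∂graphMeasure α κ, IsFiniteMeasure z.2 ∧ z.2 = κ z.1 from
    this.mono fun _ => And.right
  exact (ae_map_iff hm.aemeasurable (measurableSet_isFiniteMeasure_and_eq measurable_snd
    (by fun_prop : Measurable fun z : A × Measure B => κ z.1))).2
    (ae_of_all _ fun a => ⟨inferInstance, rfl⟩)

lemma exists_isMarkovKernel_forall_eq [Nonempty B] {g : A → Measure B} (hg : Measurable g) :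
    ∃ γ : Kernel A B, IsMarkovKernel γ ∧ ∀ a, IsProbabilityMeasure (g a) → γ a = g a := by
  classical
  obtain ⟨b₀⟩ := ‹Nonempty B›
  let γ : Kernel A B :=
    ⟨fun a => if g a Set.univ = 1 then g a else Measure.dirac b₀, Measurable.ite
      (((Measure.measurable_coe .univ).comp hg) (measurableSet_singleton 1)) hg measurable_const⟩
  have hγ (a : A) : γ a = if g a Set.univ = 1 then g a else Measure.dirac b₀ := rfl
  refine ⟨γ, ⟨fun a => ?_⟩, fun a _ => by rw [hγ, if_pos measure_univ]⟩
  rw [hγ]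
  split_ifs with h
  exacts [⟨h⟩, inferInstance]

lemma exists_eq_graphMeasure_kernel [MeasurableSpace.CountablyGenerated B] [Nonempty B]
    {u : Measure (A × Measure B)} [IsProbabilityMeasure u] {g : A → Measure B} (hg : Measurable g)
    (hu : u {z | z.2 = g z.1} = 1) (hprob : ∀ᵐ z ∂u, IsProbabilityMeasure z.2) :
    ∃ (α : Measure A) (γ : Kernel A B), IsProbabilityMeasure α ∧ IsMarkovKernel γ ∧
      u = graphMeasure α γ := by
  obtain ⟨γ, hγ, hγg⟩ := exists_isMarkovKernel_forall_eq hg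
  have hgraph : ∀ᵐ z ∂u, IsFiniteMeasure z.2 ∧ z.2 = g z.1 := by
    have hfin : {z : A × Measure B | IsFiniteMeasure z.2 ∧ z.2 = g z.1} =ᵐ[u]
        {z | z.2 = g z.1} := by
      filter_upwards [hprob] with z _
      exact propext (and_iff_right inferInstance)
    exact (mem_ae_iff_prob_eq_one (measurableSet_isFiniteMeasure_and_eq measurable_snd
      (hg.comp measurable_fst))).2 ((measure_congr hfin).trans hu)
  refine ⟨_, γ, Measure.isProbabilityMeasure_map measurable_fst.aemeasurable, hγ,
    eq_graphMeasure_of_ae γ.measurable ?_⟩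
  filter_upwards [hprob, hgraph] with z hz hzg
  rw [hγg _ (hzg.2 ▸ hz), hzg.2]

lemma und_graphMeasure_kernel [MeasurableSpace.CountablyGenerated B] (α : Measure A) [SFinite α]
    (γ : Kernel A B) [IsFiniteKernel γ] : und (graphMeasure α γ) = α ⊗ₘ γ := by
  have hae : (fun z : A × Measure B => (Measure.dirac z.1).prod z.2) =ᵐ[graphMeasure α γ]
      fun z => (Kernel.id ×ₖ γ) z.1 := by
    filter_upwards [ae_graphMeasure_eq_kernel α γ] with z hz
    rw [Kernel.prod_apply, Kernel.id_apply, ← hz]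
  have hm : Measurable fun a => (a, γ a) := by fun_prop
  rw [und, Measure.bind_congr_right hae, Measure.compProd_eq_comp_prod]
  exact congrArg Measure.join (Measure.map_map ((Kernel.measurable _).comp measurable_fst) hm)

lemma disint_compProd [StandardBorelSpace B] [Nonempty B] (α : Measure A) [IsFiniteMeasure α]
    (κ : Kernel A B) [IsMarkovKernel κ] : disint (α ⊗ₘ κ) = graphMeasure α κ := by
  have hcond : ∀ᵐ a ∂(α ⊗ₘ κ).fst, κ a = (α ⊗ₘ κ).condKernel a :=
    eq_condKernel_of_measure_eq_compProd κ (by rw [Measure.fst_compProd])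
  have hae : (fun z : A × B => (z.1, condK (α ⊗ₘ κ) z.1)) =ᵐ[α ⊗ₘ κ] fun z => (z.1, κ z.1) := by
    filter_upwards [ae_of_ae_map measurable_fst.aemeasurable hcond] with z hz
    rw [condK, dif_pos (inferInstance : IsFiniteMeasure (α ⊗ₘ κ)), hz]
  have hm : Measurable fun a => (a, κ a) := by fun_prop
  calc disint (α ⊗ₘ κ) = (α ⊗ₘ κ).map ((fun a => (a, κ a)) ∘ Prod.fst) := Measure.map_congr hae
    _ = graphMeasure (α ⊗ₘ κ).fst κ := (Measure.map_map hm measurable_fst).symm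
    _ = graphMeasure α κ := by rw [Measure.fst_compProd]

/-- The kernel sending `a` to the law of `(b, G (a, b))` when `b` has law `γ a`. -/
def graphKernel (γ : Kernel A B) (G : A × B → Y) : Kernel A (B × Y) :=
  (Kernel.id ×ₖ γ).map fun x => (x.2, G x)

variable {γ : Kernel A B} {G : A × B → Y}

lemma isMarkovKernel_graphKernel [IsMarkovKernel γ] (hG : Measurable G) :
    IsMarkovKernel (graphKernel γ G) :=
  Kernel.IsMarkovKernel.map _ (measurable_snd.prodMk hG)

lemma graphKernel_apply [IsSFiniteKernel γ] (hG : Measurable G) (a : A) :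
    graphKernel γ G a = graphMeasure (γ a) fun b => G (a, b) := by
  have hm : Measurable fun x : A × B => (x.2, G x) := measurable_snd.prodMk hG
  rw [graphKernel, Kernel.map_apply _ hm, Kernel.prod_apply, Kernel.id_apply, Measure.dirac_prod,
    Measure.map_map hm measurable_prodMk_left]
  rfl

lemma map_graphMeasure_compProd (α : Measure A) [SFinite α] [IsSFiniteKernel γ]
    (hG : Measurable G) :
    (graphMeasure (α ⊗ₘ γ) G).map (fun z => (z.1.1, (z.1.2, z.2))) = α ⊗ₘ graphKernel γ G := by
  have : IsSFiniteKernel (graphKernel γ G) := Kernel.IsSFiniteKernel.map _ _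
  have hassoc : Measurable fun x : A × B => (x.1, (x.2, G x)) := by fun_prop
  have hmap : (graphMeasure (α ⊗ₘ γ) G).map (fun z => (z.1.1, (z.1.2, z.2))) =
      (α ⊗ₘ γ).map fun x => (x.1, (x.2, G x)) := Measure.map_map (by fun_prop) (by fun_prop)
  refine Measure.ext_of_lintegral _ fun f hf => ?_
  rw [hmap, lintegral_map hf hassoc, Measure.lintegral_compProd (by fun_prop),
    Measure.lintegral_compProd hf]
  refine lintegral_congr fun a => ?_
  rw [graphKernel_apply hG, graphMeasure, lintegral_map (by fun_prop) (by fun_prop)]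

lemma disint_map_graphMeasure_compProd [StandardBorelSpace B] [Nonempty B]
    [StandardBorelSpace Y] [Nonempty Y] (α : Measure A) [IsFiniteMeasure α] [IsMarkovKernel γ]
    (hG : Measurable G) :
    disint ((graphMeasure (α ⊗ₘ γ) G).map fun z => (z.1.1, (z.1.2, z.2))) =
      graphMeasure α (graphKernel γ G) := by
  have := isMarkovKernel_graphKernel (γ := γ) hG
  rw [map_graphMeasure_compProd α hG, disint_compProd]

lemma exists_eq_graphMeasure_of_und_eq [MeasurableSpace.CountablyGenerated B] [Nonempty B]
    [MeasurableEq Y] {p : ℝ} {d : B → B → ℝ≥0∞}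
    {u₁ : Measure (A × Measure B)} [IsProbabilityMeasure u₁]
    {u₂ : Measure ((A × B) × Y)} [IsProbabilityMeasure u₂]
    (hg : ∃ g : A → Measure B, Measurable g ∧ u₁ {z | z.2 = g z.1} = 1)
    (hmem : ∀ᵐ z ∂u₁, MemPp p d z.2)
    (hG : ∃ G : A × B → Y, Measurable G ∧ u₂ {z | z.2 = G z.1} = 1)
    (hund : und u₁ = u₂.map Prod.fst) :
    ∃ (α : Measure A) (γ : Kernel A B) (G : A × B → Y), IsProbabilityMeasure α ∧
      IsMarkovKernel γ ∧ Measurable G ∧ (∀ᵐ a ∂α, MemPp p d (γ a)) ∧ u₁ = graphMeasure α γ ∧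
      u₂ = graphMeasure (α ⊗ₘ γ) G := by
  obtain ⟨g, hg, hgu⟩ := hg
  obtain ⟨G, hG, hGu⟩ := hG
  obtain ⟨α, γ, hα, hγ, rfl⟩ := exists_eq_graphMeasure_kernel hg hgu (hmem.mono fun _ h => h.1)
  refine ⟨α, γ, G, hα, hγ, hG,
    ae_of_ae_map (measurable_id.prodMk γ.measurable).aemeasurable hmem, rfl, ?_⟩
  rw [← und_graphMeasure_kernel, hund]
  exact eq_graphMeasure_of_ae hG ((mem_ae_iff_prob_eq_one
    (measurableSet_eq_fun measurable_snd (hG.comp measurable_fst))).2 hGu)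

end KernelGraph

section GraphTransport

variable {A S : Type*} [MeasurableSpace A] [MeasurableSpace S] {p : ℝ}
  {d : A × S → A × S → ℝ≥0∞} {α₀ α : Measure A} {h₀ h : A → S}

/-- Couplings of graph measures are determined by their projections to the base spaces. -/
lemma iInf_lowerLpNorm_le_Wp_graphMeasure (hp : 1 ≤ p) (hh₀ : Measurable h₀) (hh : Measurable h)
    (hgraph₀ : ∀ᵐ z ∂graphMeasure α₀ h₀, z.2 = h₀ z.1)
    (hgraph : ∀ᵐ z ∂graphMeasure α h, z.2 = h z.1) :
    ⨅ Γ ∈ Cpl α₀ α, lowerLpNorm p (fun z => d (z.1, h₀ z.1) (z.2, h z.2)) Γ ≤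
      Wp p d (graphMeasure α₀ h₀) (graphMeasure α h) := by
  refine le_iInf₂ fun π hπ => ?_
  have hΓ : π.map (Prod.map Prod.fst Prod.fst) ∈ Cpl α₀ α := by
    simpa only [map_fst_graphMeasure, hh₀, hh] using
      map_prodMap_mem_Cpl hπ measurable_fst measurable_fst
  refine (iInf₂_le _ hΓ).trans ((lowerLpNorm_map_le hp _ _).trans (lowerLpNorm_mono_ae hp ?_))
  filter_upwards [ae_of_ae_map measurable_fst.aemeasurable (hπ.1.symm ▸ hgraph₀),
    ae_of_ae_map measurable_snd.aemeasurable (hπ.2.symm ▸ hgraph)] with z hz₁ hz₂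
  simp only [Function.comp_apply, Prod.map_fst, Prod.map_snd, ← hz₁, ← hz₂, le_refl]

/-- Since `d` need not be measurable, the triangle inequality for `Wp p d` is not available; the
graph structure of the middle measure reduces it to a gluing over `A`. -/
lemma Wp_graphMeasure_le_add [StandardBorelSpace A] [Nonempty A] (hp : 1 ≤ p)
    [IsProbabilityMeasure α₀] (hh₀ : Measurable h₀) (hh : Measurable h)
    (hgraph₀ : ∀ᵐ z ∂graphMeasure α₀ h₀, z.2 = h₀ z.1) {Γ : Measure (A × A)} (hΓ : Γ ∈ Cpl α₀ α)
    {c : A × A → ℝ≥0∞} (hc : AEMeasurable c Γ)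
    (htri : ∀ x a a', d x (a', h a') ≤ d x (a, h₀ a) + c (a, a')) (θ : Measure (A × S)) :
    Wp p d θ (graphMeasure α h) ≤ Wp p d θ (graphMeasure α₀ h₀) + lowerLpNorm p c Γ := by
  conv_rhs => rw [Wp]
  simp only [ENNReal.iInf_add]
  refine le_iInf₂ fun π hπ => ?_
  have hπ' : π.map (Prod.map id Prod.fst) ∈ Cpl θ α₀ := by
    simpa only [Measure.map_id, map_fst_graphMeasure _ hh₀] using
      map_prodMap_mem_Cpl hπ measurable_id measurable_fst
  obtain ⟨ρ, hρ, hle⟩ := exists_mem_Cpl_lowerLpNorm_le_add hp hπ' hΓ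
    (c₁₂ := fun z => d z.1 (z.2, h₀ z.2)) (c₁₃ := fun z => d z.1 (z.2, h z.2)) hc htri
  have hρ' : ρ.map (Prod.map id fun a => (a, h a)) ∈ Cpl θ (graphMeasure α h) := by
    simpa only [Measure.map_id, graphMeasure] using
      map_prodMap_mem_Cpl hρ measurable_id (by fun_prop : Measurable fun a => (a, h a))
  calc Wp p d θ (graphMeasure α h)
      ≤ lowerLpNorm p (fun z => d z.1 (z.2, h z.2)) ρ :=
        (Wp_le_lowerLpNorm hρ').trans (lowerLpNorm_map_le hp _ _)
    _ ≤ lowerLpNorm p (fun z => d z.1 (z.2, h₀ z.2)) (π.map (Prod.map id Prod.fst))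
          + lowerLpNorm p c Γ := hle
    _ ≤ lowerLpNorm p (fun z => d z.1 z.2) π + lowerLpNorm p c Γ := by
      refine add_le_add_left ((lowerLpNorm_map_le hp _ _).trans (lowerLpNorm_mono_ae hp ?_)) _
      filter_upwards [ae_of_ae_map measurable_snd.aemeasurable (hπ.2.symm ▸ hgraph₀)] with z hz
      simp only [Function.comp_apply, Prod.map_fst, Prod.map_snd, ← hz, id_eq, le_refl]

end GraphTransport

section LowerLpNormKernel

variable {A B : Type*} [MeasurableSpace A] [MeasurableSpace B] {p : ℝ} {γ : Kernel A B}
  [IsSFiniteKernel γ] {f : A × B → ℝ≥0∞}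

lemma measurable_lowerLpNorm_kernel (hf : Measurable f) :
    Measurable fun a => lowerLpNorm p (fun b => f (a, b)) (γ a) :=
  ((hf.pow_const p).lintegral_kernel_prod_right').pow_const _

lemma lowerLpNorm_lowerLpNorm_kernel (hp : 1 ≤ p) (α : Measure A) [SFinite α]
    (hf : Measurable f) :
    lowerLpNorm p (fun a => lowerLpNorm p (fun b => f (a, b)) (γ a)) α =
      lowerLpNorm p f (α ⊗ₘ γ) := by
  conv_lhs => rw [lowerLpNorm]
  simp only [lowerLpNorm_rpow hp]
  rw [lowerLpNorm, Measure.lintegral_compProd (hf.pow_const p)]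

end LowerLpNormKernel

section NestedDistance

variable {A B Y : Type*} [PseudoEMetricSpace A] {p : ℝ}

lemma aemeasurable_prodDist_Wp_kernel [SecondCountableTopology A] [MeasurableSpace A]
    [OpensMeasurableSpace A] [PseudoMetricSpace B] [SecondCountableTopology B] [MeasurableSpace B]
    [StandardBorelSpace B] [OpensMeasurableSpace B] [Nonempty B] (hp : 1 ≤ p) {α₀ α : Measure A}
    {γ₀ γ : Kernel A B} (hγ₀ : ∀ᵐ a ∂α₀, MemPp p edist (γ₀ a))
    (hγ : ∀ᵐ a ∂α, MemPp p edist (γ a)) {Γ : Measure (A × A)} (hΓ : Γ ∈ Cpl α₀ α) :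
    AEMeasurable (fun z => prodDist p edist (Wp p edist) (z.1, γ₀ z.1) (z.2, γ z.2)) Γ := by
  refine ((measurable_edist.pow_const p).aemeasurable.add (AEMeasurable.pow_const
    (aemeasurable_Wp_edist hp (γ₀.measurable.comp measurable_fst) (γ.measurable.comp
      measurable_snd) ?_ ?_) p)).pow_const _
  exacts [ae_of_ae_map measurable_fst.aemeasurable (hΓ.1.symm ▸ hγ₀),
    ae_of_ae_map measurable_snd.aemeasurable (hΓ.2.symm ▸ hγ)]

lemma prodDist_Wp_triangle [PseudoEMetricSpace B] [SecondCountableTopology B] [MeasurableSpace B]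
    [StandardBorelSpace B] [OpensMeasurableSpace B] [Nonempty B] [PseudoEMetricSpace Y]
    [SecondCountableTopology Y] [MeasurableSpace Y] [StandardBorelSpace Y] [OpensMeasurableSpace Y]
    [Nonempty Y] (hp : 1 ≤ p) (u v w : A × Measure (B × Y)) [IsProbabilityMeasure v.2] :
    prodDist p edist (Wp p (prodDist p edist edist)) u w ≤
      prodDist p edist (Wp p (prodDist p edist edist)) u v
        + prodDist p edist (Wp p (prodDist p edist edist)) v w :=
  prodDist_triangle hp (edist_triangle _ _ _) <|
    Wp_triangle hp (measurable_prodDist measurable_edist measurable_edist)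
      (fun _ _ _ => prodDist_triangle hp (edist_triangle _ _ _) (edist_triangle _ _ _)) _ _ _

end NestedDistance

namespace IsGraphDefect

variable {A B Y : Type*} [PseudoEMetricSpace A] [MeasurableSpace A] [PseudoMetricSpace B]
  [MeasurableSpace B] [PseudoEMetricSpace Y] [MeasurableSpace Y] {p : ℝ} {C : ℝ≥0∞}
  {φ : (A × B) × Y → ℝ≥0∞} {γ₀ γ : Kernel A B} {G₀ G : A × B → Y}

lemma prodDist_graphKernel_le [IsMarkovKernel γ₀] [IsSFiniteKernel γ] (hφ : IsGraphDefect C φ)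
    (hC : C ≠ ∞) (hp : 1 ≤ p) (hG₀ : Measurable G₀) (hG : Measurable G) (a a' : A) :
    prodDist p edist (Wp p (prodDist p edist edist)) (a, graphKernel γ₀ G₀ a)
        (a', graphKernel γ G a') ≤
      2 * (1 + C) * prodDist p edist (Wp p edist) (a, γ₀ a) (a', γ a')
        + lowerLpNorm p (fun b => φ ((a, b), G₀ (a, b))) (γ₀ a)
        + lowerLpNorm p (fun b => φ ((a', b), G (a', b))) (γ a') := by
  set D := prodDist p edist (Wp p edist) (a, γ₀ a) (a', γ a')
  have hA : edist a a' ≤ D := fst_le_prodDist hp (a, γ₀ a) (a', γ a')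
  have hB : Wp p edist (γ₀ a) (γ a') ≤ D := snd_le_prodDist hp (a, γ₀ a) (a', γ a')
  refine (prodDist_le_add hp _ _).trans ?_
  simp only [graphKernel_apply hG₀, graphKernel_apply hG]
  refine (add_le_add_right (hφ.Wp_graphMeasure_le hC hp hG₀ hG a a' (γ₀ a) (γ a')) _).trans ?_
  grw [hA, hB]
  exact le_of_eq (by ring)

variable [SecondCountableTopology A] [StandardBorelSpace A] [Nonempty A] [OpensMeasurableSpace A]
  [SecondCountableTopology B] [StandardBorelSpace B] [Nonempty B] [OpensMeasurableSpace B]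
  [SecondCountableTopology Y] [StandardBorelSpace Y] [Nonempty Y] [OpensMeasurableSpace Y]
  {α₀ α : Measure A} [IsProbabilityMeasure α₀] [IsProbabilityMeasure α]
  [IsMarkovKernel γ₀] [IsMarkovKernel γ]

lemma Wp_graphMeasure_graphKernel_le_of_mem_Cpl (hφ : IsGraphDefect C φ) (hC : C ≠ ∞) (hp : 1 ≤ p)
    (hG₀ : Measurable G₀) (hG : Measurable G) (hγ₀ : ∀ᵐ a ∂α₀, MemPp p edist (γ₀ a))
    (hγ : ∀ᵐ a ∂α, MemPp p edist (γ a)) {Γ : Measure (A × A)} (hΓ : Γ ∈ Cpl α₀ α)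
    (θ : Measure (A × Measure (B × Y))) :
    Wp p (prodDist p edist (Wp p (prodDist p edist edist))) θ (graphMeasure α (graphKernel γ G)) ≤
      Wp p (prodDist p edist (Wp p (prodDist p edist edist))) θ
          (graphMeasure α₀ (graphKernel γ₀ G₀))
        + (2 * (1 + C) * lowerLpNorm p
              (fun z => prodDist p edist (Wp p edist) (z.1, γ₀ z.1) (z.2, γ z.2)) Γ
            + lowerLpNorm p φ (graphMeasure (α₀ ⊗ₘ γ₀) G₀)
            + lowerLpNorm p φ (graphMeasure (α ⊗ₘ γ) G)) := by
  have := isMarkovKernel_graphKernel (γ := γ₀) hG₀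
  have hφm := hφ.measurable
  have hN₀ : Measurable fun a => lowerLpNorm p (fun b => φ ((a, b), G₀ (a, b))) (γ₀ a) :=
    measurable_lowerLpNorm_kernel (f := fun x => φ (x, G₀ x)) (by fun_prop)
  have hN : Measurable fun a => lowerLpNorm p (fun b => φ ((a, b), G (a, b))) (γ a) :=
    measurable_lowerLpNorm_kernel (f := fun x => φ (x, G x)) (by fun_prop)
  have hD := aemeasurable_prodDist_Wp_kernel hp hγ₀ hγ hΓ
  refine (Wp_graphMeasure_le_add hp (graphKernel γ₀ G₀).measurable (graphKernel γ G).measurable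
    (ae_graphMeasure_eq_kernel α₀ _) hΓ
    (((hD.const_mul (2 * (1 + C))).add (hN₀.comp measurable_fst).aemeasurable).add
      (hN.comp measurable_snd).aemeasurable)
    (fun x a a' => (prodDist_Wp_triangle hp x (a, graphKernel γ₀ G₀ a) _).trans
      (add_le_add_right (hφ.prodDist_graphKernel_le hC hp hG₀ hG a a') _)) θ).trans
    (add_le_add_right ?_ _)
  rw [lowerLpNorm_graphMeasure _ hG₀ hφm, lowerLpNorm_graphMeasure _ hG hφm,
    ← lowerLpNorm_lowerLpNorm_kernel hp α₀ (by fun_prop),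
    ← lowerLpNorm_lowerLpNorm_kernel hp α (by fun_prop)]
  exact lowerLpNorm_mul_add_add_le_of_mem_Cpl hp hΓ _ (by finiteness) hN₀ hN

end IsGraphDefect

namespace IsGraphDefect

variable {A B Y : Type*} [PseudoEMetricSpace A] [SecondCountableTopology A] [MeasurableSpace A]
  [StandardBorelSpace A] [OpensMeasurableSpace A] [Nonempty A]
  [PseudoMetricSpace B] [SecondCountableTopology B] [MeasurableSpace B]
  [StandardBorelSpace B] [OpensMeasurableSpace B] [Nonempty B]
  [PseudoEMetricSpace Y] [SecondCountableTopology Y] [MeasurableSpace Y]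
  [StandardBorelSpace Y] [OpensMeasurableSpace Y] [Nonempty Y]
  {p : ℝ} {C : ℝ≥0∞} {φ : (A × B) × Y → ℝ≥0∞} {γ₀ γ : Kernel A B} {G₀ G : A × B → Y}
  {α₀ α : Measure A} [IsProbabilityMeasure α₀] [IsProbabilityMeasure α]
  [IsMarkovKernel γ₀] [IsMarkovKernel γ]

lemma Wp_graphMeasure_graphKernel_le (hφ : IsGraphDefect C φ) (hC : C ≠ ∞) (hp : 1 ≤ p)
    (hG₀ : Measurable G₀) (hG : Measurable G) (hγ₀ : ∀ᵐ a ∂α₀, MemPp p edist (γ₀ a))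
    (hγ : ∀ᵐ a ∂α, MemPp p edist (γ a)) (θ : Measure (A × Measure (B × Y))) :
    Wp p (prodDist p edist (Wp p (prodDist p edist edist))) θ (graphMeasure α (graphKernel γ G)) ≤
      Wp p (prodDist p edist (Wp p (prodDist p edist edist))) θ
          (graphMeasure α₀ (graphKernel γ₀ G₀))
        + 2 * lowerLpNorm p φ (graphMeasure (α₀ ⊗ₘ γ₀) G₀)
        + 2 * (1 + C) * (Wp p (prodDist p edist (Wp p edist)) (graphMeasure α₀ γ₀)
            (graphMeasure α γ)
          + Wp p (prodDist p (prodDist p edist edist) edist) (graphMeasure (α₀ ⊗ₘ γ₀) G₀)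
            (graphMeasure (α ⊗ₘ γ) G)) := by
  set W₂ := Wp p (prodDist p (prodDist p edist edist) edist) (graphMeasure (α₀ ⊗ₘ γ₀) G₀)
    (graphMeasure (α ⊗ₘ γ) G)
  set E₀ := lowerLpNorm p φ (graphMeasure (α₀ ⊗ₘ γ₀) G₀)
  set T₀ := Wp p (prodDist p edist (Wp p (prodDist p edist edist))) θ
    (graphMeasure α₀ (graphKernel γ₀ G₀))
  have hE : lowerLpNorm p φ (graphMeasure (α ⊗ₘ γ) G) ≤ E₀ + (1 + C) * W₂ :=
    hφ.lowerLpNorm_le_add_Wp hC hp (edist_le_prodDist hp) _ _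
  have hE' : (1 + C) * W₂ ≤ 2 * (1 + C) * W₂ := by
    gcongr
    exact le_mul_of_one_le_left' one_le_two
  rw [mul_add, ← add_assoc]
  grw [← iInf_lowerLpNorm_le_Wp_graphMeasure hp γ₀.measurable γ.measurable
    (ae_graphMeasure_eq_kernel α₀ γ₀) (ae_graphMeasure_eq_kernel α γ)]
  simp only [ENNReal.mul_iInf_of_ne (by simp : 2 * (1 + C) ≠ 0) (by finiteness),
    ENNReal.iInf_add, ENNReal.add_iInf]
  refine le_iInf₂ fun Γ hΓ => ?_
  grw [hφ.Wp_graphMeasure_graphKernel_le_of_mem_Cpl hC hp hG₀ hG hγ₀ hγ hΓ θ, hE, hE']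
  exact le_of_eq (by ring)

end IsGraphDefect

lemma MemPp.exists_lowerLpNorm_edist_ne_top {Z Y : Type*} [MeasurableSpace Z] [PseudoEMetricSpace Y]
    [MeasurableSpace Y] [OpensMeasurableSpace Y] {p : ℝ} (hp : 1 ≤ p) {d : Z → Z → ℝ≥0∞}
    {m : Measure Z} {G : Z → Y} (hG : Measurable G)
    (h : MemPp p (prodDist p d edist) (graphMeasure m G)) :
    ∃ y₀, lowerLpNorm p (fun z => edist (G z) y₀) m ≠ ∞ := by
  obtain ⟨-, v, hv⟩ := h
  refine ⟨v.2, ne_top_of_le_ne_top (b := lowerLpNorm p (prodDist p d edist v) (graphMeasure m G))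
    (ENNReal.rpow_ne_top_of_nonneg (by positivity) hv) ?_⟩
  have hφ : Measurable fun w : Z × Y => edist w.2 v.2 := measurable_edist_left.comp measurable_snd
  rw [← lowerLpNorm_graphMeasure m hG hφ]
  exact lowerLpNorm_mono hp fun w => (edist_comm _ _).trans_le (snd_le_prodDist hp v w)

lemma exists_forall_Wp_graphMeasure_graphKernel_le {A B Y : Type*} [PseudoEMetricSpace A]
    [SecondCountableTopology A] [MeasurableSpace A] [StandardBorelSpace A] [BorelSpace A]
    [Nonempty A] [PseudoMetricSpace B] [SecondCountableTopology B] [MeasurableSpace B]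
    [StandardBorelSpace B] [BorelSpace B] [Nonempty B] [MetricSpace Y]
    [SecondCountableTopology Y] [MeasurableSpace Y] [StandardBorelSpace Y] [BorelSpace Y]
    [Nonempty Y] {p : ℝ} (hp : 1 ≤ p) {α₀ : Measure A} [IsProbabilityMeasure α₀]
    {γ₀ : Kernel A B} [IsMarkovKernel γ₀] {G₀ : A × B → Y} (hG₀ : Measurable G₀)
    (hγ₀ : ∀ᵐ a ∂α₀, MemPp p edist (γ₀ a))
    (hmem : MemPp p (prodDist p (prodDist p edist edist) edist) (graphMeasure (α₀ ⊗ₘ γ₀) G₀))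
    {ε : ℝ≥0∞} (hε : ε ≠ 0) :
    ∃ C ≠ ∞, ∀ (α : Measure A) [IsProbabilityMeasure α] (γ : Kernel A B) [IsMarkovKernel γ]
      (G : A × B → Y), Measurable G → (∀ᵐ a ∂α, MemPp p edist (γ a)) →
      ∀ θ : Measure (A × Measure (B × Y)),
        Wp p (prodDist p edist (Wp p (prodDist p edist edist))) θ
            (graphMeasure α (graphKernel γ G)) ≤
          Wp p (prodDist p edist (Wp p (prodDist p edist edist))) θ
              (graphMeasure α₀ (graphKernel γ₀ G₀))
            + ε + C * (Wp p (prodDist p edist (Wp p edist)) (graphMeasure α₀ γ₀)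
                (graphMeasure α γ)
              + Wp p (prodDist p (prodDist p edist edist) edist) (graphMeasure (α₀ ⊗ₘ γ₀) G₀)
                (graphMeasure (α ⊗ₘ γ) G)) := by
  obtain ⟨y₀, hfin⟩ := hmem.exists_lowerLpNorm_edist_ne_top hp hG₀
  obtain ⟨C, hC, φ, hφ, hφε⟩ :=
    exists_isGraphDefect_lowerLpNorm_le hp hG₀ hfin (ENNReal.half_pos hε).ne'
  refine ⟨2 * (1 + C), by finiteness, fun α _ γ _ G hG hγ θ => ?_⟩
  grw [hφ.Wp_graphMeasure_graphKernel_le hC hp hG₀ hG hγ₀ hγ θ, hφε,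
    ENNReal.mul_div_cancel two_ne_zero ofNat_ne_top]

section BallTop

variable {ι γ : Type*} {d : α → α → ℝ≥0∞} {d' : β → β → ℝ≥0∞} {e : γ → γ → ℝ≥0∞}

lemma setOf_lt_mem_nhds_ballTop {x : α} (hx : d x x = 0) {δ : ℝ≥0∞} (hδ : 0 < δ) :
    {y | d x y < δ} ∈ @nhds α (ballTop d) x := by
  let := ballTop d
  have hopen : IsOpen {y | d x y < δ} :=
    TopologicalSpace.isOpen_generateFrom_of_mem ⟨x, δ, hδ, rfl⟩
  exact hopen.mem_nhds (hx.trans_lt hδ)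

lemma eventually_lt_nhds_induced_ballTop {f : ι → α} {i : ι} (hi : d (f i) (f i) = 0) {δ : ℝ≥0∞}
    (hδ : 0 < δ) :
    ∀ᶠ j in @nhds ι (TopologicalSpace.induced f (ballTop d)) i, d (f i) (f j) < δ := by
  rw [@nhds_induced _ _ (ballTop d)]
  exact preimage_mem_comap (setOf_lt_mem_nhds_ballTop hi hδ)

/-- The balls generating the topology of the codomain have arbitrary centres, hence the quantifier
over `θ`. -/
lemma continuous_ballTop_of_forall_eventually_le [TopologicalSpace ι] {F : ι → γ}
    (h : ∀ i, ∀ ε ≠ 0, ∀ᶠ j in 𝓝 i, ∀ θ, e θ (F j) ≤ e θ (F i) + ε) :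
    @Continuous ι γ _ (ballTop e) F := by
  refine continuous_generateFrom_iff.2 ?_
  rintro _ ⟨θ, r, -, rfl⟩
  refine isOpen_iff_mem_nhds.2 fun i hi => ?_
  obtain ⟨ε, hε, hlt⟩ := ENNReal.lt_iff_exists_add_pos_lt.1 hi
  filter_upwards [h i ε (ENNReal.coe_pos.2 hε).ne'] with j hj
  exact (hj θ).trans_lt hlt

lemma continuous_ballTop_of_forall_exists_le_add_mul {f : ι → α} {g : ι → β} {F : ι → γ}
    (hf : ∀ i, d (f i) (f i) = 0) (hg : ∀ i, d' (g i) (g i) = 0)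
    (h : ∀ i, ∀ ε ≠ 0, ∃ C ≠ ∞, ∀ j θ,
      e θ (F j) ≤ e θ (F i) + ε + C * (d (f i) (f j) + d' (g i) (g j))) :
    @Continuous ι γ (TopologicalSpace.induced f (ballTop d) ⊓
      TopologicalSpace.induced g (ballTop d')) (ballTop e) F := by
  refine @continuous_ballTop_of_forall_eventually_le _ _ _ (_) _ fun i ε hε => ?_
  obtain ⟨C, hC, hle⟩ := h i (ε / 2) (ENNReal.half_pos hε).ne'
  obtain ⟨δ, hδ, hCδ⟩ : ∃ δ > 0, C * (δ + δ) ≤ ε / 2 := by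
    refine ⟨ε / 2 / (2 * C), ENNReal.div_pos (ENNReal.half_pos hε).ne' (by finiteness), ?_⟩
    rw [← two_mul, ← mul_assoc, mul_comm C]
    exact ENNReal.mul_div_le
  rw [nhds_inf]
  filter_upwards [mem_inf_of_left (eventually_lt_nhds_induced_ballTop (hf i) hδ),
    mem_inf_of_right (eventually_lt_nhds_induced_ballTop (hg i) hδ)] with j hfj hgj θ
  calc e θ (F j) ≤ e θ (F i) + ε / 2 + C * (d (f i) (f j) + d' (g i) (g j)) := hle j θ
    _ ≤ e θ (F i) + ε / 2 + C * (δ + δ) := by gcongr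
    _ ≤ e θ (F i) + ε / 2 + ε / 2 := by gcongr
    _ = e θ (F i) + ε := by rw [add_assoc, ENNReal.add_halves]

end BallTop

/-- **Lemma 2.2.**  On the set `D` of pairs `(μ', μ)` with
`und_A(μ') = marginal of μ on A × B`, the joint disintegration map
`J(μ', μ) = disint_A μ` is continuous for the (nested) `p`-Wasserstein
metrics. -/
theorem joint_disintegration_continuous
    {A B Y : Type} [MetricSpace A] [CompleteSpace A] [SecondCountableTopology A]
    [MeasurableSpace A] [BorelSpace A] [Nonempty A]
    [MetricSpace B] [CompleteSpace B] [SecondCountableTopology B]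
    [MeasurableSpace B] [BorelSpace B] [Nonempty B]
    [MetricSpace Y] [CompleteSpace Y] [SecondCountableTopology Y]
    [MeasurableSpace Y] [BorelSpace Y] [Nonempty Y]
    (p : ℝ) (hp : 1 ≤ p) :
    let dA : A → A → ℝ≥0∞ := edist
    let dB : B → B → ℝ≥0∞ := edist
    let dY : Y → Y → ℝ≥0∞ := edist
    let dAB := prodDist p dA dB
    let dBY := prodDist p dB dY
    let d1 := prodDist p dA (Wp p dB)
    let d2 := prodDist p dAB dY
    let dT := prodDist p dA (Wp p dBY)
    let D := {u : Measure (A × Measure B) × Measure ((A × B) × Y) //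
      (MemPp p d1 u.1 ∧
        (∃ g : A → Measure B, Measurable g ∧ u.1 {z | z.2 = g z.1} = 1) ∧
        (∀ᵐ z ∂u.1, MemPp p dB z.2)) ∧
      (MemPp p d2 u.2 ∧
        (∃ G : A × B → Y, Measurable G ∧ u.2 {z | z.2 = G z.1} = 1)) ∧
      und u.1 = u.2.map Prod.fst}
    let τD : TopologicalSpace D :=
      TopologicalSpace.induced (fun u => u.1.1) (ballTop (Wp p d1)) ⊓
        TopologicalSpace.induced (fun u => u.1.2) (ballTop (Wp p d2))
    let J : D → Measure (A × Measure (B × Y)) :=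
      fun u => disint (u.1.2.map (fun z => (z.1.1, (z.1.2, z.2))))
    @Continuous D (Measure (A × Measure (B × Y))) τD (ballTop (Wp p dT)) J := by
  intro dA dB dY dAB dBY d1 d2 dT D τD J
  have hrep (u : D) : ∃ (α : Measure A) (γ : Kernel A B) (G : A × B → Y),
      IsProbabilityMeasure α ∧ IsMarkovKernel γ ∧ Measurable G ∧ (∀ᵐ a ∂α, MemPp p edist (γ a)) ∧
      u.1.1 = graphMeasure α γ ∧ u.1.2 = graphMeasure (α ⊗ₘ γ) G :=
    have := u.2.1.1.1
    have := u.2.2.1.1.1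
    exists_eq_graphMeasure_of_und_eq u.2.1.2.1 u.2.1.2.2 u.2.2.1.2 u.2.2.2
  refine continuous_ballTop_of_forall_exists_le_add_mul
    (fun u => Wp_self hp <| ae_of_all _ fun _ =>
      prodDist_self hp (edist_self _) (Wp_self hp (ae_of_all _ edist_self)))
    (fun u => Wp_self hp <| ae_of_all _ fun _ =>
      prodDist_self hp (prodDist_self hp (edist_self _) (edist_self _)) (edist_self _))
    fun u₀ ε hε => ?_
  obtain ⟨α₀, γ₀, G₀, _, _, hG₀, hγ₀, h₁, h₂⟩ := hrep u₀
  obtain ⟨C, hC, hle⟩ := exists_forall_Wp_graphMeasure_graphKernel_le hp hG₀ hγ₀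
    (h₂ ▸ u₀.2.2.1.1) hε
  refine ⟨C, hC, fun u θ => ?_⟩
  obtain ⟨α, γ, G, _, _, hG, hγ, h₁', h₂'⟩ := hrep u
  simpa only [J, h₁, h₂, h₁', h₂', disint_map_graphMeasure_compProd _ hG₀,
    disint_map_graphMeasure_compProd _ hG] using hle α γ G hG hγ θ

end AWPaper
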